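/- arXiv:1704.00719 — 5 statements merged into one kernel-verified Lean document; each statement's English description precedes it below -/
import Mathlib

section
/- Let (R, 𝔪) be a commutative noetherian local ring whose maximal ideal admits a direct sum decomposition 𝔪 = I ⊕ J with I and J nonzero ideals of R. Let M be a finitely generated R-module of infinite projective dimension. Then 𝔪 is a direct summand of the R-module Ω_R³M ⊕ Ω_R⁴M ⊕ Ω_R⁵M. -/
/-!
Write `𝔪 = I ⊕ J`, so `IJ = 0`. The second syzygy `N = Ω²M` is the kernel of a map `f : G → F` of
free modules with `N ⊆ 𝔪G`. Splitting `x ∈ N` as `a + b` with `a ∈ IG`, `b ∈ JG` forces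
`f a = f b = 0`, because `IF ∩ JF = 0`; hence `N` is the sum of a part killed by `J` and a part
killed by `I`. Since `M` has infinite projective dimension, `N ≠ 0`, and by Nakayama `N` has a
minimal generator killed by one of the two ideals (`exists_generator_ker`); say by `J`.

Whenever a module `X` has a minimal generator killed by `J`, the ideal `J` is a direct summand of
the first syzygy of `X` (`IsSyzygyOf.isDirectSummand`). So `J` is a direct summand of `Ω³M`. A
minimal generator of `J` is then a minimal generator of `Ω³M` killed by `I`, so `I` is a direct
summand of `Ω⁴M`. Therefore `𝔪 ≅ I × J` is already a direct summand of `Ω³M ⊕ Ω⁴M`.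

The syzygies in the statement may be computed from different resolutions, so uniqueness of syzygies
up to isomorphism (`MinimalFreeResolution.ker_equiv`) is needed to compare them.
-/

universe u

open IsLocalRing CategoryTheory

/-- A minimal free resolution of the module `M` over the local ring `R`:
`⋯ → R^{rank 2} → R^{rank 1} → R^{rank 0} → M → 0` is exact, and each differential maps into
`𝔪` times the next free module (minimality). -/
structure MinimalFreeResolution (R : Type u) [CommRing R] [IsLocalRing R]
    (M : Type u) [AddCommGroup M] [Module R M] where
  rank : ℕ → ℕ
  aug : (Fin (rank 0) → R) →ₗ[R] M
  d : (i : ℕ) → ((Fin (rank (i + 1)) → R) →ₗ[R] (Fin (rank i) → R))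
  aug_surjective : Function.Surjective aug
  exact_aug : LinearMap.ker aug = LinearMap.range (d 0)
  exact : ∀ i, LinearMap.ker (d i) = LinearMap.range (d (i + 1))
  minimal : ∀ i, LinearMap.range (d i) ≤
    (maximalIdeal R) • (⊤ : Submodule R (Fin (rank i) → R))

/-- `S` is an `i`-th syzygy `Ω^i M` of `M`, i.e. the `i`-th kernel computed from a minimal free
resolution of `M` over the local ring `R` (`Ω⁰M = M`, `Ω¹M = ker aug`, `Ω^{j+2}M = ker (d j)`). -/
def IsNthSyzygy (R : Type u) [CommRing R] [IsLocalRing R] (i : ℕ)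
    (M : Type u) [AddCommGroup M] [Module R M]
    (S : Type u) [AddCommGroup S] [Module R S] : Prop :=
  ∃ F : MinimalFreeResolution R M,
    match i with
    | 0 => Nonempty (S ≃ₗ[R] M)
    | 1 => Nonempty (S ≃ₗ[R] LinearMap.ker F.aug)
    | (j + 2) => Nonempty (S ≃ₗ[R] LinearMap.ker (F.d j))

/-- `pd_R M ≤ n`: a minimal free resolution of `M` vanishes in homological degrees `> n`. -/
def ProjDimLE (R : Type u) [CommRing R] [IsLocalRing R]
    (M : Type u) [AddCommGroup M] [Module R M] (n : ℕ) : Prop :=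
  ∃ F : MinimalFreeResolution R M, ∀ i, n < i → F.rank i = 0

/-- `A` is a direct summand of the `R`-module `X`. -/
def IsDirectSummand (R : Type u) [CommRing R] (A X : Type u)
    [AddCommGroup A] [Module R A] [AddCommGroup X] [Module R X] : Prop :=
  ∃ (ι : A →ₗ[R] X) (π : X →ₗ[R] A), π.comp ι = LinearMap.id

/-- `Y` is a first syzygy of `X`: the kernel of a free cover `R^n → X` that is minimal, in the sense
that the kernel lies in `𝔪 R^n`. -/
def IsSyzygyOf (R : Type u) [CommRing R] [IsLocalRing R] (X Y : Type u)
    [AddCommGroup X] [Module R X] [AddCommGroup Y] [Module R Y] : Prop :=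
  ∃ (n : ℕ) (p : (Fin n → R) →ₗ[R] X), Function.Surjective p ∧
    LinearMap.ker p ≤ maximalIdeal R • (⊤ : Submodule R (Fin n → R)) ∧
    Nonempty (Y ≃ₗ[R] LinearMap.ker p)

/-- `X` has a minimal generator (an element outside `𝔪X`) annihilated by the ideal `K`. -/
def HasMinimalGeneratorKilledBy (R : Type u) [CommRing R] [IsLocalRing R] (K : Ideal R)
    (X : Type u) [AddCommGroup X] [Module R X] : Prop :=
  ∃ x : X, x ∉ maximalIdeal R • (⊤ : Submodule R X) ∧ ∀ r ∈ K, r • x = 0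

section Basic

set_option linter.unusedSectionVars false

variable {R : Type u} [CommRing R] [IsLocalRing R]

lemma mem_smul_top_pi {n : ℕ} (K : Ideal R) (v : Fin n → R) :
    v ∈ K • (⊤ : Submodule R (Fin n → R)) ↔ ∀ i, v i ∈ K := by
  constructor
  · intro h i
    induction h using Submodule.smul_induction_on' with
    | smul r hr x _ => exact K.mul_mem_right _ hr
    | add x _ y _ hx hy => exact K.add_mem hx hy
  · intro h
    rw [pi_eq_sum_univ' v]
    exact Submodule.sum_mem _ fun i _ => Submodule.smul_mem_smul (h i) trivial

lemma map_mem_smul_top {X Y : Type u} [AddCommGroup X] [Module R X] [AddCommGroup Y] [Module R Y]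
    {K : Ideal R} (f : X →ₗ[R] Y) {x : X} (hx : x ∈ K • (⊤ : Submodule R X)) :
    f x ∈ K • (⊤ : Submodule R Y) := by
  have h := Submodule.mem_map_of_mem (f := f) hx
  rw [Submodule.map_smul''] at h
  exact Submodule.smul_mono le_rfl le_top h

lemma smul_top_ne_top {X : Type u} [AddCommGroup X] [Module R X] [Module.Finite R X]
    [Nontrivial X] : maximalIdeal R • (⊤ : Submodule R X) ≠ ⊤ := by
  intro h
  have := Submodule.eq_bot_of_le_smul_of_le_jacobson_bot (maximalIdeal R) (⊤ : Submodule R X)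
    Module.Finite.fg_top h.ge (maximalIdeal_le_jacobson _)
  exact top_ne_bot this

lemma HasMinimalGeneratorKilledBy.congr {K : Ideal R} {X Y : Type u} [AddCommGroup X] [Module R X]
    [AddCommGroup Y] [Module R Y] (e : X ≃ₗ[R] Y) (h : HasMinimalGeneratorKilledBy R K X) :
    HasMinimalGeneratorKilledBy R K Y := by
  obtain ⟨x, hx, hK⟩ := h
  refine ⟨e x, fun h => hx ?_, fun r hr => by rw [← map_smul, hK r hr, map_zero]⟩
  simpa using map_mem_smul_top e.symm.toLinearMap h

lemma IsDirectSummand.congr {A X Y : Type u} [AddCommGroup A] [Module R A]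
    [AddCommGroup X] [Module R X] [AddCommGroup Y] [Module R Y] (e : X ≃ₗ[R] Y)
    (h : IsDirectSummand R A X) : IsDirectSummand R A Y := by
  obtain ⟨ι, π, h⟩ := h
  refine ⟨e.toLinearMap ∘ₗ ι, π ∘ₗ e.symm.toLinearMap, ?_⟩
  ext a
  simpa using LinearMap.congr_fun h a

/-! ### Uniqueness of syzygies -/

/-- An endomorphism of `R^n` compatible with a minimal cover is congruent to the identity
modulo `𝔪`, hence bijective by Nakayama. -/
lemma bijective_of_comp_eq {n : ℕ} {X : Type u} [AddCommGroup X] [Module R X]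
    (p : (Fin n → R) →ₗ[R] X)
    (hp : LinearMap.ker p ≤ maximalIdeal R • (⊤ : Submodule R (Fin n → R)))
    (f : (Fin n → R) →ₗ[R] (Fin n → R)) (hf : p ∘ₗ f = p) : Function.Bijective f := by
  have hs : Function.Surjective f := by
    rw [← LinearMap.range_eq_top, eq_top_iff]
    refine Submodule.le_of_le_smul_of_le_jacobson_bot (I := maximalIdeal R)
      Module.Finite.fg_top (maximalIdeal_le_jacobson _) ?_
    intro x _
    have h1 : x - f x ∈ LinearMap.ker p := by
      have := LinearMap.congr_fun hf x
      simp only [LinearMap.comp_apply] at this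
      simp [LinearMap.mem_ker, this]
    have h2 : x = f x + (x - f x) := by abel
    rw [h2]
    exact Submodule.add_mem_sup ⟨x, rfl⟩ (hp h1)
  exact ⟨OrzechProperty.injective_of_surjective_endomorphism f hs, hs⟩

/-- First syzygies are unique up to isomorphism: lifting each minimal cover through the other
gives maps between the free modules whose composites are bijective. -/
lemma IsSyzygyOf.unique {X X' Y Y' : Type u} [AddCommGroup X] [Module R X]
    [AddCommGroup X'] [Module R X'] [AddCommGroup Y] [Module R Y] [AddCommGroup Y'] [Module R Y']
    (h : IsSyzygyOf R X Y) (h' : IsSyzygyOf R X' Y') (e : X ≃ₗ[R] X') :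
    Nonempty (Y ≃ₗ[R] Y') := by
  obtain ⟨n, p, hp, hpm, ⟨a⟩⟩ := h
  obtain ⟨n', p', hp', hpm', ⟨b⟩⟩ := h'
  obtain ⟨f, hf⟩ := Module.projective_lifting_property p' (e.toLinearMap ∘ₗ p) hp'
  obtain ⟨g, hg⟩ := Module.projective_lifting_property (e.toLinearMap ∘ₗ p) p'
    (e.surjective.comp hp)
  have hf' : ∀ x, p' (f x) = e (p x) := fun x => LinearMap.congr_fun hf x
  have hg' : ∀ x, e (p (g x)) = p' x := fun x => LinearMap.congr_fun hg x
  have h1 := bijective_of_comp_eq p hpm (g ∘ₗ f) (by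
    refine LinearMap.ext fun x => e.injective ?_
    simp [hg', hf'])
  have h2 := bijective_of_comp_eq p' hpm' (f ∘ₗ g) (LinearMap.ext fun x => by simp [hg', hf'])
  have hfb : Function.Bijective f :=
    ⟨Function.Injective.of_comp (f := g) h1.1, Function.Surjective.of_comp (g := g) h2.2⟩
  let E := LinearEquiv.ofBijective f hfb
  have hE : (LinearMap.ker p).map (E : (Fin n → R) →ₗ[R] (Fin n' → R)) = LinearMap.ker p' := by
    ext y
    obtain ⟨x, rfl⟩ := E.surjective y
    have hx : p' (E x) = e (p x) := hf' x
    simp [LinearMap.mem_ker, hx]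
  exact ⟨a.trans ((E.ofSubmodules _ _ hE).trans b.symm)⟩

/-! ### Summands of syzygies and minimal generators -/

/-- The isomorphism `K × L ≃ 𝔪`, `(k, l) ↦ k + l`, attached to a decomposition `𝔪 = K ⊕ L`. -/
noncomputable def directSumEquiv {K L : Ideal R} (hinf : K ⊓ L = ⊥)
    (hsup : K ⊔ L = maximalIdeal R) : (K × L) ≃ₗ[R] maximalIdeal R :=
  LinearEquiv.ofBijective
    ((Submodule.inclusion (hsup ▸ le_sup_left : K ≤ maximalIdeal R)).coprod
      (Submodule.inclusion (hsup ▸ le_sup_right : L ≤ maximalIdeal R))) <| by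
    constructor
    · rw [← LinearMap.ker_eq_bot, LinearMap.ker_eq_bot']
      rintro ⟨k, l⟩ hkl
      have h0 : (k : R) + (l : R) = 0 := by simpa using congrArg Subtype.val hkl
      have hk : (k : R) ∈ K ⊓ L := by
        refine ⟨k.2, ?_⟩
        rw [eq_neg_of_add_eq_zero_left h0]
        exact L.neg_mem l.2
      rw [hinf, Submodule.mem_bot] at hk
      have hl : (l : R) = 0 := by simpa [hk] using h0
      ext <;> simp [hk, hl]
    · rintro ⟨r, hr⟩
      obtain ⟨k, hk, l, hl, rfl⟩ := Submodule.mem_sup.1 (hsup ▸ hr)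
      exact ⟨(⟨k, hk⟩, ⟨l, hl⟩), Subtype.ext rfl⟩

/-- If `𝔪 = K ⊕ L` and `X` has a minimal generator killed by `L`, then `L` is a direct summand of
the first syzygy of `X`. A preimage `v` of the generator in the free cover has a unit coordinate;
`L` embeds by `r ↦ r v`, and that coordinate followed by the projection `𝔪 → L` is, up to a unit,
a retraction. -/
lemma IsSyzygyOf.isDirectSummand {K L : Ideal R} (hinf : K ⊓ L = ⊥)
    (hsup : K ⊔ L = maximalIdeal R) {X Y : Type u} [AddCommGroup X] [Module R X]
    [AddCommGroup Y] [Module R Y] (h : IsSyzygyOf R X Y)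
    (hX : HasMinimalGeneratorKilledBy R L X) : IsDirectSummand R L Y := by
  obtain ⟨n, p, hp, hpm, ⟨a⟩⟩ := h
  obtain ⟨x, hx, hL⟩ := hX
  obtain ⟨v, rfl⟩ := hp x
  have hv : ∃ i, v i ∉ maximalIdeal R := by
    by_contra! hc
    exact hx (map_mem_smul_top p ((mem_smul_top_pi _ v).2 hc))
  obtain ⟨i, hi⟩ := hv
  obtain ⟨w, hw⟩ := (IsLocalRing.notMem_maximalIdeal.1 hi).exists_right_inv
  obtain ⟨q, hq⟩ : ∃ q : maximalIdeal R →ₗ[R] L, ∀ (r : maximalIdeal R) (hr : (r : R) ∈ L),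
      q r = ⟨r, hr⟩ := by
    let E := directSumEquiv hinf hsup
    refine ⟨LinearMap.snd R K L ∘ₗ E.symm.toLinearMap, fun r hr => ?_⟩
    have : E.symm r = (0, ⟨r, hr⟩) := by
      rw [LinearEquiv.symm_apply_eq]
      apply Subtype.ext
      exact (zero_add (r : R)).symm
    simp [this]
  let ι : L →ₗ[R] LinearMap.ker p :=
    ((LinearMap.toSpanSingleton R _ v) ∘ₗ L.subtype).codRestrict _ (fun r => by
      simp [LinearMap.mem_ker, hL r r.2])
  let π : LinearMap.ker p →ₗ[R] maximalIdeal R :=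
    ((LinearMap.proj i) ∘ₗ (LinearMap.ker p).subtype).codRestrict _
      (fun y => (mem_smul_top_pi _ _).1 (hpm y.2) i)
  refine IsDirectSummand.congr a.symm ⟨ι, w • (q ∘ₗ π), ?_⟩
  ext r
  have hr : ((π (ι r) : maximalIdeal R) : R) = r * v i := rfl
  have := hq (π (ι r)) (hr ▸ L.mul_mem_right _ r.2)
  simp only [LinearMap.comp_apply, LinearMap.smul_apply, this, LinearMap.id_apply]
  simp only [Submodule.coe_smul, smul_eq_mul, hr]
  linear_combination (r : R) * hw

/-- A direct summand `L ≠ 0` of `X` contributes a minimal generator of `X`, killed by every ideal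
`K` with `K ∩ L = 0`. -/
lemma hasMinimalGeneratorKilledBy_of_isDirectSummand [IsNoetherianRing R] {K L : Ideal R}
    (hinf : K ⊓ L = ⊥) (hL : L ≠ ⊥) {X : Type u} [AddCommGroup X] [Module R X]
    (h : IsDirectSummand R L X) : HasMinimalGeneratorKilledBy R K X := by
  obtain ⟨ι, π, h⟩ := h
  have : Nontrivial L := Submodule.nontrivial_iff_ne_bot.2 hL
  obtain ⟨l, -, hl⟩ := SetLike.exists_of_lt
    (lt_top_iff_ne_top.2 (smul_top_ne_top (R := R) (X := L)))
  refine ⟨ι l, fun hc => hl ?_, fun r hr => ?_⟩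
  · have := map_mem_smul_top π hc
    rwa [← LinearMap.comp_apply, h] at this
  · have : r • l = 0 := by
      have h0 : r * (l : R) ∈ K ⊓ L := ⟨K.mul_mem_right _ hr, L.mul_mem_left _ l.2⟩
      rw [hinf, Submodule.mem_bot] at h0
      exact Subtype.ext h0
    rw [← map_smul, this, map_zero]

/-- If a map `f : G → F` of free modules has nonzero kernel `N ⊆ 𝔪G`, and `𝔪 = I ⊕ J`, then `N` has a
minimal generator killed by `I` or by `J`. For `x ∈ N` write `x = a + b` with `a ∈ IG`, `b ∈ JG`;
then `f a = - f b` lies in `IF ∩ JF = 0`, so `a, b ∈ N`, and they are killed by `J` and `I`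
respectively. If `x` is a minimal generator of `N`, so is `a` or `b`. -/
lemma exists_generator_ker [IsNoetherianRing R] {I J : Ideal R} (hinf : I ⊓ J = ⊥)
    (hsup : I ⊔ J = maximalIdeal R) {m n : ℕ} (f : (Fin m → R) →ₗ[R] (Fin n → R))
    (hk : LinearMap.ker f ≤ maximalIdeal R • ⊤) (hne : LinearMap.ker f ≠ ⊥) :
    HasMinimalGeneratorKilledBy R I (LinearMap.ker f) ∨
      HasMinimalGeneratorKilledBy R J (LinearMap.ker f) := by
  have : Nontrivial (LinearMap.ker f) := Submodule.nontrivial_iff_ne_bot.2 hne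
  obtain ⟨x, -, hx⟩ := SetLike.exists_of_lt
    (lt_top_iff_ne_top.2 (smul_top_ne_top (R := R) (X := LinearMap.ker f)))
  have hxm := hk x.2
  rw [← hsup, Submodule.sup_smul] at hxm
  obtain ⟨a, ha, b, hb, hab⟩ := Submodule.mem_sup.1 hxm
  have h0 : f a + f b = 0 := by rw [← map_add, hab]; exact x.2
  have hfa : f a = 0 := by
    ext i
    have h1 := (mem_smul_top_pi _ _).1 (map_mem_smul_top f ha) i
    have h2 := (mem_smul_top_pi _ _).1 (map_mem_smul_top f hb) i
    have h3 : f a i = - f b i := eq_neg_of_add_eq_zero_left (congrFun h0 i)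
    have h4 : f a i ∈ I ⊓ J := ⟨h1, h3 ▸ J.neg_mem h2⟩
    rwa [hinf, Submodule.mem_bot] at h4
  have hfb : f b = 0 := by simpa [hfa] using h0
  have hkill : ∀ r ∈ I, ∀ s ∈ J, r * s = 0 := by
    intro r hr s hs
    have h4 : r * s ∈ I ⊓ J := ⟨I.mul_mem_right _ hr, J.mul_mem_left _ hs⟩
    rwa [hinf, Submodule.mem_bot] at h4
  by_cases hA : (⟨a, hfa⟩ : LinearMap.ker f) ∈
      maximalIdeal R • (⊤ : Submodule R (LinearMap.ker f))
  · refine Or.inl ⟨⟨b, hfb⟩, fun hB => hx ?_, fun r hr => ?_⟩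
    · have : x = ⟨a, hfa⟩ + ⟨b, hfb⟩ := Subtype.ext hab.symm
      rw [this]
      exact Submodule.add_mem _ hA hB
    · apply Subtype.ext
      ext i
      exact hkill r hr _ ((mem_smul_top_pi _ _).1 hb i)
  · refine Or.inr ⟨⟨a, hfa⟩, hA, fun r hr => ?_⟩
    apply Subtype.ext
    ext i
    exact (mul_comm _ _).trans (hkill _ ((mem_smul_top_pi _ _).1 ha i) r hr)

/-! ### Minimal free resolutions -/

variable {M : Type u} [AddCommGroup M] [Module R M]

namespace MinimalFreeResolution

lemma ker_le (F : MinimalFreeResolution R M) (i : ℕ) :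
    LinearMap.ker (F.d i) ≤ maximalIdeal R • ⊤ :=
  (F.exact i).trans_le (F.minimal (i + 1))

/-- A map `d : G → F` whose kernel lies in `𝔪G` exhibits that kernel as the first syzygy of any
submodule equal to the image of `d`. -/
lemma isSyzygyOf_of_range {m n : ℕ} (d : (Fin m → R) →ₗ[R] (Fin n → R))
    (N : Submodule R (Fin n → R)) (hN : N = LinearMap.range d)
    (hd : LinearMap.ker d ≤ maximalIdeal R • ⊤) : IsSyzygyOf R N (LinearMap.ker d) := by
  subst hN
  exact ⟨m, d.rangeRestrict, d.surjective_rangeRestrict, by rwa [LinearMap.ker_rangeRestrict],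
    ⟨LinearEquiv.ofEq _ _ (LinearMap.ker_rangeRestrict d).symm⟩⟩

lemma isSyzygyOf_aug (F : MinimalFreeResolution R M) : IsSyzygyOf R M (LinearMap.ker F.aug) :=
  ⟨_, F.aug, F.aug_surjective, F.exact_aug.trans_le (F.minimal 0), ⟨LinearEquiv.refl _ _⟩⟩

lemma isSyzygyOf_zero (F : MinimalFreeResolution R M) :
    IsSyzygyOf R (LinearMap.ker F.aug) (LinearMap.ker (F.d 0)) :=
  isSyzygyOf_of_range _ _ F.exact_aug (F.ker_le 0)

lemma isSyzygyOf_succ (F : MinimalFreeResolution R M) (i : ℕ) :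
    IsSyzygyOf R (LinearMap.ker (F.d i)) (LinearMap.ker (F.d (i + 1))) :=
  isSyzygyOf_of_range _ _ (F.exact i) (F.ker_le (i + 1))

lemma ker_equiv (F F' : MinimalFreeResolution R M) (i : ℕ) :
    Nonempty (LinearMap.ker (F.d i) ≃ₗ[R] LinearMap.ker (F'.d i)) := by
  induction i with
  | zero =>
    obtain ⟨e⟩ := F.isSyzygyOf_aug.unique F'.isSyzygyOf_aug (LinearEquiv.refl R M)
    exact F.isSyzygyOf_zero.unique F'.isSyzygyOf_zero e
  | succ i ih =>
    obtain ⟨e⟩ := ih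
    exact (F.isSyzygyOf_succ i).unique (F'.isSyzygyOf_succ i) e

lemma rank_succ_eq_zero (F : MinimalFreeResolution R M) (i : ℕ) (h : F.d i = 0) :
    F.rank (i + 1) = 0 := by
  by_contra hne
  have : NeZero (F.rank (i + 1)) := ⟨hne⟩
  refine smul_top_ne_top (R := R) (X := Fin (F.rank (i + 1)) → R) (top_le_iff.1 ?_)
  simpa [h] using F.ker_le i

lemma ker_ne_bot (F : MinimalFreeResolution R M) (hpd : ¬ ∃ n : ℕ, ProjDimLE R M n) :
    LinearMap.ker (F.d 0) ≠ ⊥ := by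
  intro h
  refine hpd ⟨1, F, fun i hi => ?_⟩
  induction i, hi using Nat.le_induction with
  | base =>
    exact F.rank_succ_eq_zero 1 (LinearMap.range_eq_bot.1 ((F.exact 0).symm.trans h))
  | succ i _ ih =>
    refine F.rank_succ_eq_zero i (LinearMap.ext fun x => ?_)
    have : IsEmpty (Fin (F.rank i)) := by rw [ih]; infer_instance
    exact Subsingleton.elim _ _

end MinimalFreeResolution

/-- If `Ω²M` has a minimal generator killed by `L`, then `L` is a direct summand of `Ω³M`; this
gives a minimal generator of `Ω³M` killed by `K`, so `K` is a direct summand of `Ω⁴M`. -/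
lemma isDirectSummand_of_generator [IsNoetherianRing R] {K L : Ideal R} (hL : L ≠ ⊥)
    (hinf : K ⊓ L = ⊥) (hsup : K ⊔ L = maximalIdeal R) (F : MinimalFreeResolution R M)
    (hgen : HasMinimalGeneratorKilledBy R L (LinearMap.ker (F.d 0)))
    {S₃ S₄ S₅ : Type u} [AddCommGroup S₃] [Module R S₃] [AddCommGroup S₄] [Module R S₄]
    [AddCommGroup S₅] [Module R S₅] (e₃ : S₃ ≃ₗ[R] LinearMap.ker (F.d 1))
    (e₄ : S₄ ≃ₗ[R] LinearMap.ker (F.d 2)) :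
    IsDirectSummand R (maximalIdeal R) (S₃ × S₄ × S₅) := by
  have h3 := (F.isSyzygyOf_succ 0).isDirectSummand hinf hsup hgen
  have h4 := (F.isSyzygyOf_succ 1).isDirectSummand (inf_comm K L ▸ hinf) (sup_comm K L ▸ hsup)
    (hasMinimalGeneratorKilledBy_of_isDirectSummand hinf hL h3)
  obtain ⟨ι₃, π₃, h₃⟩ := h3.congr e₃.symm
  obtain ⟨ι₄, π₄, h₄⟩ := h4.congr e₄.symm
  let E := directSumEquiv hinf hsup
  refine ⟨((ι₃ ∘ₗ LinearMap.snd R K L).prod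
      ((ι₄ ∘ₗ LinearMap.fst R K L).prod 0)) ∘ₗ E.symm.toLinearMap,
    E.toLinearMap ∘ₗ ((π₄ ∘ₗ LinearMap.fst R S₄ S₅ ∘ₗ LinearMap.snd R S₃ (S₄ × S₅)).prod
      (π₃ ∘ₗ LinearMap.fst R S₃ (S₄ × S₅))), LinearMap.ext fun r => ?_⟩
  obtain ⟨⟨k, l⟩, rfl⟩ := E.surjective r
  have h₃' : π₃ (ι₃ l) = l := LinearMap.congr_fun h₃ l
  have h₄' : π₄ (ι₄ k) = k := LinearMap.congr_fun h₄ k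
  simp [h₃', h₄']

end Basic

/-- **Theorem A.** If the maximal ideal of a commutative noetherian local ring `R` decomposes as
`𝔪 = I ⊕ J` with `I, J` nonzero ideals, and `M` is a finitely generated `R`-module of infinite
projective dimension, then `𝔪` is a direct summand of `Ω³M ⊕ Ω⁴M ⊕ Ω⁵M`. -/
theorem maximalIdeal_isDirectSummand_of_syzygies_of_infinite_projDim
    (R : Type u) [CommRing R] [IsNoetherianRing R] [IsLocalRing R]
    (I J : Ideal R) (hI : I ≠ ⊥) (hJ : J ≠ ⊥) (hinf : I ⊓ J = ⊥)
    (hsup : I ⊔ J = maximalIdeal R)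
    (M : Type u) [AddCommGroup M] [Module R M] [Module.Finite R M]
    (hpd : ¬ ∃ n : ℕ, ProjDimLE R M n) :
    ∀ (S₃ S₄ S₅ : Type u) [AddCommGroup S₃] [Module R S₃] [AddCommGroup S₄] [Module R S₄]
      [AddCommGroup S₅] [Module R S₅],
      IsNthSyzygy R 3 M S₃ → IsNthSyzygy R 4 M S₄ → IsNthSyzygy R 5 M S₅ →
      IsDirectSummand R (↥(maximalIdeal R)) (S₃ × S₄ × S₅) := by
  intro S₃ S₄ S₅ _ _ _ _ _ _ h₃ h₄ _
  -- `S₃` and `S₄` may come from different resolutions; move `S₄` to that of `S₃`.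
  obtain ⟨F, ⟨e₃⟩⟩ := h₃
  obtain ⟨F', ⟨e₄⟩⟩ := h₄
  obtain ⟨e⟩ := F'.ker_equiv F 2
  rcases exists_generator_ker hinf hsup (F.d 0) (F.ker_le 0) (F.ker_ne_bot hpd) with h | h
  · exact isDirectSummand_of_generator hI (inf_comm I J ▸ hinf) (sup_comm I J ▸ hsup) F h e₃
      (e₄.trans e)
  · exact isDirectSummand_of_generator hJ hinf hsup F h e₃ (e₄.trans e)
end

section
/- Let (R, 𝔪) be a commutative noetherian local ring with 𝔪 = I ⊕ J a non-trivial direct sum decomposition into nonzero ideals, and let M be a finitely generated R-module with pd_R M ≥ 2. If the local ring R/I or the local ring R/J has depth 0, then 𝔪 is a direct summand of Ω_R³M or of Ω_R⁴M. -/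
/-!
The proof shows that `𝔪` is always a direct summand of `Ω⁴M`.

Because `𝔪 = I ⊕ J`, every submodule `N ≤ 𝔪F` of a free module `F` which is the kernel of a linear
map to a free module splits as `(N ∩ IF) ⊕ (N ∩ JF)`. If `N ∩ JF ≠ 0`, then Nakayama's lemma gives
a minimal generator of `N` lying in `JF`, hence killed by `I`; lifting it along the minimal cover
`f : Rⁿ → N` gives a vector `v ∉ 𝔪Rⁿ` with `I v ⊆ ker f` (`exists_lift_of_ne_zero`). As
`I v` is nonzero, the next syzygy `ker f` then meets `IRⁿ` nontrivially.

If `R/I` has depth `0`, its socle yields a nonzero `s ∈ J` with `s𝔪 = 0`, and `s` times a basis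
vector lies in the kernel of every minimal differential. So `Ω²M` meets `J`-multiples nontrivially,
and therefore `Ω³M` meets both the `I`- and the `J`-multiples nontrivially. Lifting once more gives
`v, w ∉ 𝔪Rⁿ` with `J v, I w ⊆ Ω⁴M`. Then `i + j ↦ i w + j v` embeds `𝔪` in `Ω⁴M`, and it is
split by reading the `I`-part of a coordinate at which `w` is a unit and the `J`-part of a
coordinate at which `v` is a unit (`isDirectSummand_of_lifts`).
-/

universe u

open IsLocalRing CategoryTheory

/-- A local ring has depth zero iff every non-unit is a zerodivisor. -/
def DepthZero (A : Type u) [CommRing A] : Prop :=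
  ∀ y : A, ¬ IsUnit y → y ∉ nonZeroDivisors A

section Helpers

variable {R : Type u} [CommRing R]

lemma eq_zero_of_mem_inf {I J : Ideal R} (hinf : I ⊓ J = ⊥) {x : R} (hx : x ∈ I) (hy : x ∈ J) :
    x = 0 := by
  have : x ∈ I ⊓ J := ⟨hx, hy⟩
  rwa [hinf, Ideal.mem_bot] at this

lemma mul_eq_zero_of_inf {I J : Ideal R} (hinf : I ⊓ J = ⊥) {x y : R} (hx : x ∈ I) (hy : y ∈ J) :
    x * y = 0 :=
  eq_zero_of_mem_inf hinf (I.mul_mem_right _ hx) (J.mul_mem_left _ hy)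

lemma coord_mem_of_mem_smul_top {A : Ideal R} {n : ℕ} {x : Fin n → R}
    (hx : x ∈ A • (⊤ : Submodule R (Fin n → R))) (k : Fin n) : x k ∈ A := by
  induction hx using Submodule.smul_induction_on' with
  | smul r hr y hy => exact A.mul_mem_right _ hr
  | add x hx y hy h1 h2 => exact A.add_mem h1 h2

/-- A linear map between free modules preserves vectors with all coordinates in a given ideal. -/
lemma map_coord_mem {A : Ideal R} {n m : ℕ} (f : (Fin n → R) →ₗ[R] (Fin m → R))
    {x : Fin n → R} (hx : ∀ k, x k ∈ A) (l : Fin m) : f x l ∈ A := by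
  rw [LinearMap.pi_apply_eq_sum_univ f x, Finset.sum_apply]
  exact A.sum_mem fun k _ => A.mul_mem_right _ (hx k)

lemma exists_decomp {I J A : Ideal R} (hsup : I ⊔ J = A) {n : ℕ} {x : Fin n → R}
    (hx : ∀ k, x k ∈ A) :
    ∃ y z : Fin n → R, (∀ k, y k ∈ I) ∧ (∀ k, z k ∈ J) ∧ y + z = x := by
  have h : ∀ k, ∃ y ∈ I, ∃ z ∈ J, y + z = x k := fun k =>
    Submodule.mem_sup.1 (hsup ▸ hx k)
  choose y hy z hz h using h
  exact ⟨y, z, hy, hz, funext h⟩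

/-- The kernel of a linear map between free modules contains the `J`-part of each of its
elements (and, by symmetry, the `I`-part), provided `I ⊓ J = ⊥`. -/
lemma map_part_eq_zero {I J : Ideal R} (hinf : I ⊓ J = ⊥) {n m : ℕ}
    (g : (Fin n → R) →ₗ[R] (Fin m → R)) {y z : Fin n → R} (hy : ∀ k, y k ∈ I)
    (hz : ∀ k, z k ∈ J) (h : g (y + z) = 0) : g z = 0 := by
  funext l
  refine eq_zero_of_mem_inf hinf ?_ (map_coord_mem g hz l)
  have : g z l = - g y l := by
    have := congrFun h l
    rw [map_add] at this
    exact eq_neg_of_add_eq_zero_right this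
  rw [this]
  exact I.neg_mem (map_coord_mem g hy l)

lemma single_coord_mem {J : Ideal R} {s : R} (hs : s ∈ J) {n : ℕ} (k l : Fin n) :
    (Pi.single k s : Fin n → R) l ∈ J := by
  rw [Pi.single_apply]
  split_ifs
  · exact hs
  · exact J.zero_mem

variable [IsLocalRing R]

/-- If the syzygy `ker g = range f` contains a nonzero vector with coordinates in `J`, then it has
a minimal generator killed by `I`, that is, some `v ∉ 𝔪Rⁿ` satisfies `I v ⊆ ker f`. -/
lemma exists_lift_of_ne_zero [IsNoetherianRing R] {I J : Ideal R} (hinf : I ⊓ J = ⊥)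
    (hsup : I ⊔ J = maximalIdeal R) {n m l : ℕ}
    (f : (Fin n → R) →ₗ[R] (Fin m → R)) (g : (Fin m → R) →ₗ[R] (Fin l → R))
    (hfg : LinearMap.ker g = LinearMap.range f)
    (hf : LinearMap.range f ≤ maximalIdeal R • (⊤ : Submodule R (Fin m → R)))
    {x : Fin m → R} (hx0 : x ≠ 0) (hxJ : ∀ k, x k ∈ J) (hgx : g x = 0) :
    ∃ v : Fin n → R, (∃ k, IsUnit (v k)) ∧ ∀ a ∈ I, f (a • v) = 0 := by
  let N : Submodule R (Fin m → R) := LinearMap.ker g ⊓ Submodule.pi Set.univ (fun _ => J)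
  have hN : ∀ y, y ∈ N ↔ g y = 0 ∧ ∀ k, y k ∈ J := fun y => by
    simp [N, Submodule.mem_pi]
  have hnot : ¬ N ≤ maximalIdeal R • N := fun h => by
    have hbot := Submodule.eq_bot_of_le_smul_of_le_jacobson_bot (maximalIdeal R) N
      (IsNoetherian.noetherian N) h (IsLocalRing.maximalIdeal_le_jacobson _)
    have : x ∈ N := (hN x).2 ⟨hgx, hxJ⟩
    rw [hbot] at this
    exact hx0 ((Submodule.mem_bot R).1 this)
  obtain ⟨t, htN, ht⟩ := SetLike.not_le_iff_exists.1 hnot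
  obtain ⟨hgt, htJ⟩ := (hN t).1 htN
  have : t ∈ LinearMap.range f := hfg ▸ hgt
  obtain ⟨v, rfl⟩ := this
  refine ⟨v, ?_, fun a ha => ?_⟩
  · by_contra! hv
    apply ht
    have hdec : ∀ k : Fin n, ∃ y z : Fin m → R, (∀ k, y k ∈ I) ∧ (∀ k, z k ∈ J) ∧
        y + z = f (Pi.single k 1) := fun k =>
      exists_decomp hsup fun j => coord_mem_of_mem_smul_top (hf (LinearMap.mem_range_self f _)) j
    choose y z hy hz hyz using hdec
    have hzN : ∀ k, z k ∈ N := fun k => by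
      refine (hN _).2 ⟨map_part_eq_zero hinf g (hy k) (hz k) ?_, hz k⟩
      rw [hyz]
      have : f (Pi.single k 1) ∈ LinearMap.ker g := hfg ▸ LinearMap.mem_range_self f _
      exact this
    have hfv : f v = ∑ k, v k • y k + ∑ k, v k • z k := by
      rw [← Finset.sum_add_distrib]
      conv_lhs => rw [pi_eq_sum_univ' v]
      simp [← smul_add, hyz]
    -- The `I`-part of `f v` vanishes because `f v` has coordinates in `J`.
    have hy0 : ∑ k, v k • y k = 0 := by
      funext j
      refine eq_zero_of_mem_inf hinf ?_ ?_
      · rw [Finset.sum_apply]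
        exact I.sum_mem fun k _ => I.mul_mem_left _ (hy k j)
      · have h1 : (∑ k, v k • y k) j = f v j - (∑ k, v k • z k) j := by
          rw [hfv]; simp
        rw [h1, Finset.sum_apply]
        exact J.sub_mem (htJ j) (J.sum_mem fun k _ => J.mul_mem_left _ (hz k j))
    rw [hfv, hy0, zero_add]
    exact Submodule.sum_mem _ fun k _ =>
      Submodule.smul_mem_smul ((mem_maximalIdeal _).2 (hv k)) (hzN k)
  · rw [map_smul]
    funext j
    exact mul_eq_zero_of_inf hinf ha (htJ j)

/-- The projections of `𝔪 = I ⊕ J` onto its two summands, as maps into `R`. -/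
lemma exists_projections {I J : Ideal R} (hinf : I ⊓ J = ⊥) (hsup : I ⊔ J = maximalIdeal R) :
    ∃ p q : maximalIdeal R →ₗ[R] R, (∀ x, p x ∈ I) ∧ (∀ x, q x ∈ J) ∧
      ∀ x, p x + q x = (x : R) := by
  have h : ∀ x : maximalIdeal R, ∃ y ∈ I, ∃ z ∈ J, y + z = (x : R) := fun x =>
    Submodule.mem_sup.1 (hsup.symm ▸ x.2 : (x : R) ∈ I ⊔ J)
  choose p hp q hq hpq using h
  have huniq : ∀ x : maximalIdeal R, ∀ y ∈ I, (x : R) - y ∈ J → p x = y := fun x y hy hz => by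
    refine sub_eq_zero.1 (eq_zero_of_mem_inf hinf (I.sub_mem (hp x) hy) ?_)
    have : p x - y = ((x : R) - y) - q x := by rw [← hpq x]; ring
    rw [this]
    exact J.sub_mem hz (hq x)
  let P : maximalIdeal R →ₗ[R] R :=
    { toFun := p
      map_add' := fun x y => huniq _ _ (I.add_mem (hp x) (hp y)) (by
        have : ((x + y : maximalIdeal R) : R) - (p x + p y) = q x + q y := by
          rw [Submodule.coe_add, ← hpq x, ← hpq y]; ring
        rw [this]
        exact J.add_mem (hq x) (hq y))
      map_smul' := fun r x => huniq _ _ (I.mul_mem_left r (hp x)) (by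
        have : ((r • x : maximalIdeal R) : R) - r * p x = r * q x := by
          rw [Submodule.coe_smul, ← hpq x, smul_eq_mul]; ring
        change ((r • x : maximalIdeal R) : R) - r * p x ∈ J
        rw [this]
        exact J.mul_mem_left _ (hq x)) }
  refine ⟨P, (maximalIdeal R).subtype - P, hp, fun x => ?_, fun x => ?_⟩
  · have : ((maximalIdeal R).subtype - P) x = q x := by
      change (x : R) - p x = q x
      rw [← hpq x]; ring
    rw [this]
    exact hq x
  · simp

/-- A submodule `K ≤ 𝔪Rⁿ` containing `J v` and `I w`, where `v, w ∉ 𝔪Rⁿ`, has `𝔪` as a direct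
summand. -/
lemma isDirectSummand_of_lifts {I J : Ideal R} (hinf : I ⊓ J = ⊥)
    (hsup : I ⊔ J = maximalIdeal R) {n : ℕ} (K : Submodule R (Fin n → R))
    (hK : K ≤ maximalIdeal R • (⊤ : Submodule R (Fin n → R)))
    {v w : Fin n → R} (hv : ∃ k, IsUnit (v k)) (hw : ∃ k, IsUnit (w k))
    (hJv : ∀ a ∈ J, a • v ∈ K) (hIw : ∀ a ∈ I, a • w ∈ K) :
    IsDirectSummand R (maximalIdeal R) K := by
  obtain ⟨p, q, hp, hq, hpq⟩ := exists_projections hinf hsup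
  obtain ⟨a, ha⟩ := hv
  obtain ⟨b, hb⟩ := hw
  obtain ⟨a', ha'⟩ := ha.exists_left_inv
  obtain ⟨b', hb'⟩ := hb.exists_left_inv
  have hIm : I ≤ maximalIdeal R := hsup ▸ le_sup_left
  have hJm : J ≤ maximalIdeal R := hsup ▸ le_sup_right
  have huniq : ∀ (x : maximalIdeal R) (i j : R), i ∈ I → j ∈ J → (x : R) = i + j →
      p x = i ∧ q x = j := fun x i j hi hj h => by
    have h1 : p x - i = j - q x := by
      have := hpq x
      rw [h] at this
      linear_combination this
    have h2 : p x - i = 0 := eq_zero_of_mem_inf hinf (I.sub_mem (hp x) hi)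
      (h1 ▸ J.sub_mem hj (hq x))
    exact ⟨sub_eq_zero.1 h2, (sub_eq_zero.1 (h1 ▸ h2)).symm⟩
  let ι : maximalIdeal R →ₗ[R] K := LinearMap.codRestrict K
    (p.smulRight w + q.smulRight v) (fun x => K.add_mem (hIw _ (hp x)) (hJv _ (hq x)))
  let c : Fin n → (K →ₗ[R] maximalIdeal R) := fun k =>
    LinearMap.codRestrict (maximalIdeal R) ((LinearMap.proj k).comp K.subtype)
      (fun x => coord_mem_of_mem_smul_top (hK x.2) k)
  let π : K →ₗ[R] maximalIdeal R := LinearMap.codRestrict (maximalIdeal R)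
    (b' • p.comp (c b) + a' • q.comp (c a))
    (fun x => add_mem (Ideal.mul_mem_left _ _ (hIm (hp _))) (Ideal.mul_mem_left _ _ (hJm (hq _))))
  refine ⟨ι, π, LinearMap.ext fun x => Subtype.ext ?_⟩
  have hc : ∀ k, (c k (ι x) : R) = p x * w k + q x * v k := fun k => rfl
  have h1 := fun k => huniq (c k (ι x)) _ _ (I.mul_mem_right _ (hp x)) (J.mul_mem_right _ (hq x))
    (hc k)
  change b' * p (c b (ι x)) + a' * q (c a (ι x)) = (x : R)
  rw [(h1 b).1, (h1 a).2, ← hpq x]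
  linear_combination p x * hb' + q x * ha'

/-- If `R/I` has depth `0` then `J`, being the maximal ideal of `R/I`, contains a nonzero socle
element of `R`. -/
lemma exists_socle [IsNoetherianRing R] {I J : Ideal R} (hJ : J ≠ ⊥) (hinf : I ⊓ J = ⊥)
    (hsup : I ⊔ J = maximalIdeal R) (hd : DepthZero (R ⧸ I)) :
    ∃ s ∈ J, s ≠ 0 ∧ ∀ a ∈ maximalIdeal R, a * s = 0 := by
  have hIm : I ≤ maximalIdeal R := hsup ▸ le_sup_left
  have hJm : J ≤ maximalIdeal R := hsup ▸ le_sup_right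
  have hItop : I ≠ ⊤ := fun h => (maximalIdeal.isMaximal R).ne_top (top_le_iff.1 (h ▸ hIm))
  have : Nontrivial (R ⧸ I) := Ideal.Quotient.nontrivial_iff.2 hItop
  have : IsLocalRing (R ⧸ I) :=
    IsLocalRing.of_surjective' (Ideal.Quotient.mk I) Ideal.Quotient.mk_surjective
  -- By prime avoidance the maximal ideal of `R/I` is an associated prime.
  have hsub : ((maximalIdeal (R ⧸ I) : Ideal (R ⧸ I)) : Set (R ⧸ I)) ⊆
      ⋃ P ∈ associatedPrimes (R ⧸ I) (R ⧸ I), (P : Set (R ⧸ I)) := by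
    rw [biUnion_associatedPrimes_eq_compl_nonZeroDivisors]
    exact fun y hy => hd y ((mem_maximalIdeal y).1 hy)
  have hfin := associatedPrimes.finite (R ⧸ I) (R ⧸ I)
  obtain ⟨P, hP, hle⟩ := (Ideal.subset_union_prime_finite hfin (f := fun P => P) ⊤ ⊤
    (fun P hP _ _ => hP.isPrime)).1 hsub
  have hann : ∃ x : R ⧸ I, x ≠ 0 ∧ ∀ y ∈ maximalIdeal (R ⧸ I), y * x = 0 := by
    rw [AssociatedPrimes.mem_iff, isAssociatedPrime_iff] at hP
    obtain ⟨prime, x, rfl⟩ := hP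
    refine ⟨x, fun h => prime.ne_top (by simp [h]), fun y hy => ?_⟩
    simpa [Submodule.mem_colon_singleton] using hle hy
  obtain ⟨x, hx0, hx⟩ := hann
  obtain ⟨x, rfl⟩ := Ideal.Quotient.mk_surjective x
  have hxI : ∀ a ∈ maximalIdeal R, a * x ∈ I := fun a ha => by
    rw [← Ideal.Quotient.eq_zero_iff_mem, map_mul]
    refine hx _ ((mem_maximalIdeal _).2 fun hu => ?_)
    obtain ⟨b, hb⟩ := hu.exists_left_inv
    obtain ⟨b, rfl⟩ := Ideal.Quotient.mk_surjective b
    rw [← map_mul, ← map_one (Ideal.Quotient.mk I), Ideal.Quotient.eq] at hb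
    have h1 := Ideal.sub_mem _ (Ideal.mul_mem_left _ b ha) (hIm hb)
    rw [sub_sub_cancel] at h1
    exact (maximalIdeal.isMaximal R).ne_top ((Ideal.eq_top_iff_one _).2 h1)
  have hx0' : x ∉ I := fun h => hx0 (Ideal.Quotient.eq_zero_iff_mem.2 h)
  have hxm : x ∈ maximalIdeal R := by
    refine (mem_maximalIdeal _).2 fun hu => hJ ?_
    rw [eq_bot_iff]
    intro j hj
    have : j * x ∈ I := hxI j (hJm hj)
    exact eq_zero_of_mem_inf hinf ((Ideal.mul_unit_mem_iff_mem I hu).1 this) hj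
  obtain ⟨i, hi, j, hj, rfl⟩ := Submodule.mem_sup.1 (hsup ▸ hxm : x ∈ I ⊔ J)
  refine ⟨j, hj, fun h => hx0' (by simpa [h] using hi), fun a ha => ?_⟩
  refine eq_zero_of_mem_inf hinf ?_ (J.mul_mem_left _ hj)
  have : a * j = a * (i + j) - a * i := by ring
  rw [this]
  exact I.sub_mem (hxI a ha) (I.mul_mem_left _ hi)

lemma map_socle_single {s : R} (hs : ∀ a ∈ maximalIdeal R, a * s = 0) {n m : ℕ}
    (f : (Fin n → R) →ₗ[R] (Fin m → R))
    (hf : LinearMap.range f ≤ maximalIdeal R • (⊤ : Submodule R (Fin m → R))) (k : Fin n) :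
    f (Pi.single k s) = 0 := by
  have : (Pi.single k s : Fin n → R) = s • Pi.single k 1 := by
    rw [← Pi.single_smul, smul_eq_mul, mul_one]
  rw [this, map_smul]
  funext j
  have := hs _ (coord_mem_of_mem_smul_top (hf (LinearMap.mem_range_self f (Pi.single k 1))) j)
  rw [Pi.smul_apply, smul_eq_mul, mul_comm, this, Pi.zero_apply]

/-- A minimal free resolution stays zero once it vanishes in some positive degree. -/
lemma rank_succ_eq_zero {M : Type u} [AddCommGroup M] [Module R M]
    (F : MinimalFreeResolution R M) {i : ℕ} (h : F.rank (i + 1) = 0) : F.rank (i + 2) = 0 := by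
  by_contra hne
  let k : Fin (F.rank (i + 2)) := ⟨0, Nat.pos_of_ne_zero hne⟩
  have hker : (Pi.single k 1 : Fin (F.rank (i + 2)) → R) ∈ LinearMap.ker (F.d (i + 1)) := by
    rw [LinearMap.mem_ker]
    funext j
    exact absurd j.2 (by omega)
  rw [F.exact] at hker
  have := coord_mem_of_mem_smul_top (F.minimal _ hker) k
  rw [Pi.single_eq_same] at this
  exact (maximalIdeal.isMaximal R).ne_top ((Ideal.eq_top_iff_one _).2 this)

lemma rank_one_ne_zero {M : Type u} [AddCommGroup M] [Module R M]
    (hpd : ¬ ProjDimLE R M 1) (F : MinimalFreeResolution R M) : F.rank 1 ≠ 0 := fun h => by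
  have hall : ∀ i, F.rank (i + 1) = 0 := fun i => by
    induction i with
    | zero => exact h
    | succ i ih => exact rank_succ_eq_zero F ih
  refine hpd ⟨F, fun i hi => ?_⟩
  obtain ⟨j, rfl⟩ : ∃ j, i = j + 1 := ⟨i - 1, by omega⟩
  exact hall j

/-- If `R/I` has depth `0`, then `𝔪` is a direct summand of the fourth syzygy. -/
lemma isDirectSummand_ker [IsNoetherianRing R] {I J : Ideal R} (hI : I ≠ ⊥) (hJ : J ≠ ⊥)
    (hinf : I ⊓ J = ⊥) (hsup : I ⊔ J = maximalIdeal R) {M : Type u} [AddCommGroup M] [Module R M]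
    (hpd : ¬ ProjDimLE R M 1) (hd : DepthZero (R ⧸ I)) (F : MinimalFreeResolution R M) :
    IsDirectSummand R (maximalIdeal R) (LinearMap.ker (F.d 2)) := by
  obtain ⟨s, hsJ, hs0, hs⟩ := exists_socle hJ hinf hsup hd
  have hinf' : J ⊓ I = ⊥ := by rwa [inf_comm]
  have hsup' : J ⊔ I = maximalIdeal R := by rwa [sup_comm]
  -- `Ω²M` contains `s` times a basis vector.
  let k : Fin (F.rank 1) := ⟨0, Nat.pos_of_ne_zero (rank_one_ne_zero hpd F)⟩
  obtain ⟨u, ⟨l, hul⟩, hu⟩ := exists_lift_of_ne_zero hinf hsup (F.d 1) (F.d 0) (F.exact 0)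
    (F.minimal 1) (x := Pi.single k s) (by simpa using hs0) (single_coord_mem hsJ k)
    (map_socle_single hs _ (F.minimal 0) k)
  obtain ⟨w, hw, hIw⟩ := exists_lift_of_ne_zero hinf hsup (F.d 2) (F.d 1) (F.exact 1)
    (F.minimal 2) (x := Pi.single l s) (by simpa using hs0) (single_coord_mem hsJ l)
    (map_socle_single hs _ (F.minimal 1) l)
  obtain ⟨a, haI, ha0⟩ := Submodule.exists_mem_ne_zero_of_ne_bot hI
  obtain ⟨v, hv, hJv⟩ := exists_lift_of_ne_zero hinf' hsup' (F.d 2) (F.d 1) (F.exact 1)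
    (F.minimal 2) (x := a • u)
    (fun h => ha0 (hul.mul_left_eq_zero.1 (congrFun h l)))
    (fun j => I.mul_mem_right _ haI) (hu a haI)
  refine isDirectSummand_of_lifts hinf hsup _ ?_ hv hw hJv hIw
  rw [F.exact 2]
  exact F.minimal 3

end Helpers

/-- **Theorem 3.1(2).** If `𝔪 = I ⊕ J` is a non-trivial decomposition, `pd_R M ≥ 2`, and `R/I` or
`R/J` has depth `0`, then `𝔪` is a direct summand of `Ω³M` or of `Ω⁴M`. -/
theorem maximalIdeal_isDirectSummand_of_depth_zero
    (R : Type u) [CommRing R] [IsNoetherianRing R] [IsLocalRing R]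
    (I J : Ideal R) (hI : I ≠ ⊥) (hJ : J ≠ ⊥) (hinf : I ⊓ J = ⊥)
    (hsup : I ⊔ J = maximalIdeal R)
    (M : Type u) [AddCommGroup M] [Module R M] [Module.Finite R M]
    (hpd : ¬ ProjDimLE R M 1)
    (hdepth : DepthZero (R ⧸ I) ∨ DepthZero (R ⧸ J)) :
    (∀ (S : Type u) [AddCommGroup S] [Module R S],
        IsNthSyzygy R 3 M S → IsDirectSummand R (↥(maximalIdeal R)) S) ∨
    (∀ (S : Type u) [AddCommGroup S] [Module R S],
        IsNthSyzygy R 4 M S → IsDirectSummand R (↥(maximalIdeal R)) S) := by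
  refine Or.inr fun S _ _ hS => ?_
  obtain ⟨F, ⟨e⟩⟩ := hS
  have hF : IsDirectSummand R (maximalIdeal R) (LinearMap.ker (F.d 2)) := by
    rcases hdepth with hd | hd
    · exact isDirectSummand_ker hI hJ hinf hsup hpd hd F
    · exact isDirectSummand_ker hJ hI (by rwa [inf_comm]) (by rwa [sup_comm]) hpd hd F
  obtain ⟨ι, π, h⟩ := hF
  refine ⟨e.symm.toLinearMap.comp ι, π.comp e.toLinearMap, LinearMap.ext fun x => ?_⟩
  simpa using LinearMap.congr_fun h x
end

section
/- Let (R, 𝔪) be a commutative noetherian local ring with a direct sum decomposition 𝔪 = I ⊕ J of the maximal ideal into ideals I and J. Let N be a finitely generated R/I-module and let n = ν_{R/I}(N) = ν_R(N) be its minimal number of generators. Then there is an isomorphism of R-modules Ω_R N ≅ I^{⊕n} ⊕ Ω_{R/I} N. -/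
/-!
Two surjections from free modules of finite rank onto `N` whose kernels lie in `𝔪` times the free
module differ by an automorphism of the free module (`exists_surjective_lift`, via Nakayama), and
their rank is the minimal number of generators of `N`. One such surjection is the augmentation `f`
over `R`; another is the composite `R^q → (R/I)^q → N` with the augmentation `g` over `R/I`.
Hence `Ω_R N` is isomorphic to the kernel `K` of this composite.

The kernel `K` is an extension of `ker g = Ω_{R/I} N` by `I^q`. It is contained in `𝔪^q`, and the
projection `𝔪 = I ⊕ J → I` restricts coordinatewise to a retraction of `K` onto `I^q`, so the
extension splits (`kernel_splitting`).
-/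

universe u

open IsLocalRing CategoryTheory

/-- A surjection from a free module lifts through a minimal free cover `f`, and by Nakayama's
lemma the lift is surjective. -/
lemma exists_surjective_lift {R : Type*} [CommRing R] [IsLocalRing R]
    {N : Type*} [AddCommGroup N] [Module R N] {m p : ℕ}
    (h : (Fin m → R) →ₗ[R] N) (hh : Function.Surjective h)
    (f : (Fin p → R) →ₗ[R] N) (hf : Function.Surjective f)
    (hmin : ∀ x, f x = 0 → ∀ i, x i ∈ maximalIdeal R) :
    ∃ u : (Fin m → R) →ₗ[R] (Fin p → R), Function.Surjective u ∧ ∀ x, f (u x) = h x := by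
  obtain ⟨u, hu⟩ := Module.projective_lifting_property f h hf
  have hu' : ∀ x, f (u x) = h x := fun x => LinearMap.congr_fun hu x
  refine ⟨u, ?_, hu'⟩
  rw [← LinearMap.range_eq_top, eq_top_iff]
  refine Submodule.le_of_le_smul_of_le_jacobson_bot (I := maximalIdeal R)
    Module.Finite.fg_top (IsLocalRing.maximalIdeal_le_jacobson _) ?_
  intro x _
  obtain ⟨y, hy⟩ := hh (f x)
  have hk : f (x - u y) = 0 := by rw [map_sub, hu', hy, sub_self]
  have hx : x = u y + (x - u y) := by abel
  rw [hx]
  refine Submodule.add_mem_sup ⟨y, rfl⟩ ?_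
  rw [pi_eq_sum_univ' (x - u y)]
  exact Submodule.sum_mem _ fun i _ =>
    Submodule.smul_mem_smul (hmin _ hk i) Submodule.mem_top

lemma mem_of_mem_smul_top {R : Type*} [CommRing R] (I : Ideal R) {p : ℕ} {x : Fin p → R}
    (hx : x ∈ I • (⊤ : Submodule R (Fin p → R))) (i : Fin p) : x i ∈ I := by
  have hle : I • (⊤ : Submodule R (Fin p → R)) ≤ Submodule.comap (LinearMap.proj i) I :=
    Submodule.smul_le.2 fun r hr y _ => I.mul_mem_right (y i) hr
  exact hle hx

lemma MinimalFreeResolution.mem_maximalIdeal {R : Type u} [CommRing R] [IsLocalRing R]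
    {M : Type u} [AddCommGroup M] [Module R M] (F : MinimalFreeResolution R M)
    (x : Fin (F.rank 0) → R) (hx : F.aug x = 0) (i : Fin (F.rank 0)) :
    x i ∈ maximalIdeal R := by
  have hx' : x ∈ LinearMap.ker F.aug := hx
  rw [F.exact_aug] at hx'
  exact mem_of_mem_smul_top _ (F.minimal 0 hx') i

lemma exists_retraction {R : Type*} [CommRing R] (I J : Ideal R) (hinf : I ⊓ J = ⊥) :
    ∃ ρ : ↥(I ⊔ J) →ₗ[R] I, ∀ (a : R) (ha : a ∈ I), ρ ⟨a, Ideal.mem_sup_left ha⟩ = ⟨a, ha⟩ := by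
  let f : R →ₗ.[R] I := ⟨I, LinearMap.id⟩
  let g : R →ₗ.[R] I := ⟨J, 0⟩
  have hfg : ∀ (x : f.domain) (y : g.domain), (x : R) = y → f x = g y := by
    intro x y hxy
    have hx : (x : R) ∈ I ⊓ J := ⟨x.2, by rw [hxy]; exact y.2⟩
    rw [hinf, Submodule.mem_bot] at hx
    exact Subtype.ext hx
  refine ⟨(f.sup g hfg).toFun, fun a ha => ?_⟩
  have := (f.left_le_sup g hfg).2 (x := ⟨a, ha⟩) (y := ⟨a, Ideal.mem_sup_left ha⟩) rfl
  exact this.symm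

/-- Reduction modulo `I` in each coordinate. -/
def reduceMod {R : Type*} [CommRing R] (I : Ideal R) (q : ℕ) :
    (Fin q → R) →ₗ[R] (Fin q → R ⧸ I) :=
  LinearMap.pi fun i => (Submodule.mkQ I).comp (LinearMap.proj i)

lemma reduceMod_apply {R : Type*} [CommRing R] (I : Ideal R) (q : ℕ) (x : Fin q → R) (i : Fin q) :
    reduceMod I q x i = Ideal.Quotient.mk I (x i) := rfl

lemma reduceMod_surjective {R : Type*} [CommRing R] (I : Ideal R) (q : ℕ) :
    Function.Surjective (reduceMod I q) := fun y => by
  choose x hx using fun i => Ideal.Quotient.mk_surjective (y i)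
  exact ⟨x, funext hx⟩

/-- The splitting of `0 → I^q → K → L → 0`, where `K` is the preimage in `R^q` of a
submodule `L` of `(R/I)^q` and `K` is contained in `(I ⊕ J)^q`. -/
lemma kernel_splitting {R : Type*} [CommRing R] (I J : Ideal R) (hinf : I ⊓ J = ⊥) {q : ℕ}
    (L : Submodule R (Fin q → R ⧸ I))
    (hK : ∀ x ∈ L.comap (reduceMod I q), ∀ i, x i ∈ I ⊔ J) :
    Nonempty (L.comap (reduceMod I q) ≃ₗ[R] ((Fin q → I) × L)) := by
  obtain ⟨ρ, hρ⟩ := exists_retraction I J hinf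
  let α : L.comap (reduceMod I q) →ₗ[R] (Fin q → I) := LinearMap.pi fun i =>
    ρ.comp (((LinearMap.proj i).comp (Submodule.subtype _)).codRestrict (I ⊔ J)
      fun x => hK x.1 x.2 i)
  have hα : ∀ x i, α x i = ρ ⟨x.1 i, hK x.1 x.2 i⟩ := fun _ _ => rfl
  let β : L.comap (reduceMod I q) →ₗ[R] L :=
    (reduceMod I q).restrict fun _ hx => hx
  have hβ : ∀ x, (β x : Fin q → R ⧸ I) = reduceMod I q x.1 := fun _ => rfl
  -- the retraction property of `α` on tuples with entries in `I`
  have hαI : ∀ x (a : Fin q → I), (∀ i, x.1 i = (a i : R)) → α x = a := by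
    intro x a hxa
    funext i
    rw [hα]
    have := hρ (a i) (a i).2
    simpa only [hxa i] using this
  have hmemI : ∀ a : Fin q → I, reduceMod I q (fun i => (a i : R)) = 0 := fun a =>
    funext fun i => Ideal.Quotient.eq_zero_iff_mem.2 (a i).2
  refine ⟨LinearEquiv.ofBijective (α.prod β) ⟨?_, ?_⟩⟩
  · rw [injective_iff_map_eq_zero]
    intro x hx
    have h1 : α x = 0 := congrArg Prod.fst hx
    have h2 : reduceMod I q x.1 = 0 := by
      rw [← hβ, show β x = 0 from congrArg Prod.snd hx]; rfl
    have h3 : ∀ i, x.1 i ∈ I := fun i =>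
      Ideal.Quotient.eq_zero_iff_mem.1 (congrFun h2 i)
    have h4 := hαI x (fun i => ⟨x.1 i, h3 i⟩) fun _ => rfl
    rw [h1] at h4
    exact Subtype.ext (funext fun i => (congrArg Subtype.val (congrFun h4 i)).symm)
  · rintro ⟨a, y⟩
    obtain ⟨x, hx⟩ := reduceMod_surjective I q y.1
    let x' : L.comap (reduceMod I q) := ⟨x, by rw [Submodule.mem_comap, hx]; exact y.2⟩
    -- correct the lift `x'` of `y` by a tuple in `I`, which does not change its reduction
    let z : L.comap (reduceMod I q) := ⟨fun i => ((a - α x') i : R), by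
      rw [Submodule.mem_comap, hmemI]; exact L.zero_mem⟩
    refine ⟨x' + z, Prod.ext ?_ (Subtype.ext ?_)⟩
    · change α (x' + z) = a
      rw [map_add, hαI z (a - α x') fun _ => rfl]
      abel
    · change reduceMod I q (x + fun i => ((a - α x') i : R)) = y.1
      rw [map_add, hmemI, add_zero, hx]

/-- **Lemma 3.2.** If `𝔪 = I ⊕ J` and `N` is a finitely generated `R/I`-module with
`n = ν(N)` generators, then `Ω_R N ≅ I^{⊕n} ⊕ Ω_{R/I} N` as `R`-modules. -/
theorem syzygy_of_module_over_quotient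
    (R : Type u) [CommRing R] [IsNoetherianRing R] [IsLocalRing R]
    (I J : Ideal R) (hinf : I ⊓ J = ⊥) (hsup : I ⊔ J = maximalIdeal R)
    [IsLocalRing (R ⧸ I)] [IsNoetherianRing (R ⧸ I)]
    (N : Type u) [AddCommGroup N] [Module (R ⧸ I) N] [Module R N]
    [IsScalarTower R (R ⧸ I) N] [Module.Finite R N]
    (n : ℕ)
    (hn : n = sInf {m : ℕ | ∃ f : (Fin m → R) →ₗ[R] N, Function.Surjective f}) :
    ∀ (S T : Type u) [AddCommGroup S] [Module R S]
      [AddCommGroup T] [Module (R ⧸ I) T] [Module R T] [IsScalarTower R (R ⧸ I) T],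
      IsNthSyzygy R 1 N S → IsNthSyzygy (R ⧸ I) 1 N T →
      Nonempty (S ≃ₗ[R] ((Fin n → ↥I) × T)) := by
  intro S T _ _ _ _ _ _ hS hT
  obtain ⟨F, ⟨eS⟩⟩ := hS
  obtain ⟨G, ⟨eT⟩⟩ := hT
  let g : (Fin (G.rank 0) → R ⧸ I) →ₗ[R] N := G.aug.restrictScalars R
  let f' : (Fin (G.rank 0) → R) →ₗ[R] N := g.comp (reduceMod I (G.rank 0))
  have hf' : Function.Surjective f' := G.aug_surjective.comp (reduceMod_surjective I _)
  have hmin' : ∀ x, f' x = 0 → ∀ i, x i ∈ maximalIdeal R := by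
    intro x hx i
    have h := G.mem_maximalIdeal (reduceMod I _ x) hx i
    rw [reduceMod_apply, mem_maximalIdeal, mem_nonunits_iff] at h
    rw [mem_maximalIdeal, mem_nonunits_iff]
    exact fun hu => h (hu.map _)
  obtain ⟨u, hu, hfu⟩ := exists_surjective_lift F.aug F.aug_surjective f' hf' hmin'
  have hle : ∀ m, (∃ h : (Fin m → R) →ₗ[R] N, Function.Surjective h) → G.rank 0 ≤ m := by
    rintro m ⟨h, hh⟩
    obtain ⟨v, hv, -⟩ := exists_surjective_lift h hh f' hf' hmin'
    exact le_of_fin_surjective R v hv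
  have hnG : n = G.rank 0 := by
    rw [hn]
    exact le_antisymm (Nat.sInf_le ⟨f', hf'⟩) (le_csInf ⟨_, f', hf'⟩ hle)
  have hFG : F.rank 0 = G.rank 0 := by
    obtain ⟨v, hv, -⟩ := exists_surjective_lift f' hf' F.aug F.aug_surjective F.mem_maximalIdeal
    exact le_antisymm (le_of_fin_surjective R v hv) (hle _ ⟨F.aug, F.aug_surjective⟩)
  -- a surjection between free modules of the same finite rank is bijective
  have hinj : Function.Injective u := by
    let c : (Fin (G.rank 0) → R) ≃ₗ[R] (Fin (F.rank 0) → R) :=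
      LinearEquiv.funCongrLeft R R (finCongr hFG)
    have h := OrzechProperty.injective_of_surjective_endomorphism
      (c.toLinearMap.comp u) (c.surjective.comp hu)
    exact Function.Injective.of_comp (f := c) h
  let e := LinearEquiv.ofBijective u ⟨hinj, hu⟩
  have hker : LinearMap.ker F.aug = (LinearMap.ker f').comap e.toLinearMap := by
    ext x
    simp only [LinearMap.mem_ker, Submodule.mem_comap]
    rw [← hfu x]
    rfl
  obtain ⟨s⟩ := kernel_splitting I J hinf (LinearMap.ker g) (fun x hx i => by
    rw [hsup]; exact hmin' x hx i)
  let eT' : T ≃ₗ[R] LinearMap.ker g := eT.restrictScalars R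
  subst hnG
  exact ⟨eS ≪≫ₗ LinearEquiv.ofEq _ _ hker ≪≫ₗ e.ofSubmodule' (LinearMap.ker f') ≪≫ₗ s ≪≫ₗ
    (LinearEquiv.refl R _).prodCongr eT'.symm⟩
end

section
/- Let (R, 𝔪) be a commutative noetherian local ring, M a finitely generated R-module, and 𝐱 = x₁,…,xₙ an R-regular sequence (n ≥ 0) that annihilates M. Then for all integers t ≥ 0 and u ≥ n there exists an integer v ≥ 0 such that Ω_R^u(Ω_{R/(𝐱)}^t M) ≅ Ω_R^{u+t} M ⊕ R^{⊕v} as R-modules. -/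
/-!
Write `A = R/(𝐱)`. The regular sequence gives `pd_R A ≤ n`, so `pd_R (A^r) ≤ n ≤ w`.

The main step (`IsIterSyzygy.shift_of_exact`) concerns a short exact sequence
`0 → S → F → S' → 0` with `pd_R F ≤ w`: then `Ω^w S ≅ Ω^{w+1} S' ⊕ R^v`. The horseshoe
construction replaces the sequence by `0 → Ω S → K → Ω S' → 0`, where `K` is the kernel of a
surjection from a finite free module onto `F`, so `pd_R K ≤ w - 1`. After `w` such steps the middle
term is projective, hence free, and the left term is the kernel of a surjection from a free module
onto `Ω^w S'`. By Nakayama's lemma such a kernel is the kernel of the minimal cover, which is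
`Ω^{w+1} S'`, plus a free module (`exists_ker_equiv_ker_prod`).

Applied to `0 → Ω_A M → A^r → M → 0` with `w + t` in place of `w`, this gives
`Ω_R^{w+t} (Ω_A M) ≅ Ω_R^{w+t+1} M ⊕ R^v`, and the theorem follows by induction on `t`, the case
`t = 0` being the uniqueness of minimal syzygies. To run the inductions, syzygies are described by
the recursive predicate `IsIterSyzygy`, which peels off one minimal free cover at a time.
-/

universe u

open IsLocalRing CategoryTheory

/-! ### Minimal free covers -/

section Covers

lemma mem_smul_top_of_forall_mem {R : Type u} [CommRing R] (I : Ideal R) {k : ℕ} (a : Fin k → R) (ha : ∀ i, a i ∈ I) :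
    a ∈ I • (⊤ : Submodule R (Fin k → R)) := by
  have : a = ∑ i, a i • (Pi.single i 1 : Fin k → R) := by
    simpa using pi_eq_sum_univ' a
  rw [this]
  exact Submodule.sum_mem _ fun i _ => Submodule.smul_mem_smul (ha i) trivial

variable {R : Type u} [CommRing R] [IsLocalRing R]

/-- A map into the source of a minimal cover that covers the same module is onto (Nakayama). -/
lemma surjective_of_comp_minimal {k : ℕ} {N P : Type u} [AddCommGroup N] [Module R N]
    [AddCommGroup P] [Module R P] (f : (Fin k → R) →ₗ[R] N)
    (hmin : LinearMap.ker f ≤ maximalIdeal R • (⊤ : Submodule R (Fin k → R)))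
    (φ : P →ₗ[R] (Fin k → R)) (h : Function.Surjective (f ∘ₗ φ)) :
    Function.Surjective φ := by
  rw [← LinearMap.range_eq_top, ← top_le_iff]
  refine Submodule.le_of_le_smul_of_le_jacobson_bot (I := maximalIdeal R)
    Module.Finite.fg_top (IsLocalRing.maximalIdeal_le_jacobson ⊥) ?_
  intro y _
  obtain ⟨z, hz⟩ := h (f y)
  have hk : y - φ z ∈ LinearMap.ker f := by
    simpa [sub_eq_zero] using hz.symm
  have := Submodule.add_mem_sup (LinearMap.mem_range_self φ z) (hmin hk)
  simpa using this

/-- The kernel of any cover by a finite projective module is the kernel of the minimal cover plus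
a free module. -/
lemma exists_ker_equiv_ker_prod [IsNoetherianRing R] {k : ℕ} {N P : Type u}
    [AddCommGroup N] [Module R N] [AddCommGroup P] [Module R P] [Module.Finite R P]
    [Module.Projective R P] (f : (Fin k → R) →ₗ[R] N) (hf : Function.Surjective f)
    (hmin : LinearMap.ker f ≤ maximalIdeal R • (⊤ : Submodule R (Fin k → R)))
    (p : P →ₗ[R] N) (hp : Function.Surjective p) :
    ∃ v : ℕ, Nonempty (LinearMap.ker p ≃ₗ[R] (LinearMap.ker f × (Fin v → R))) := by
  obtain ⟨φ, hφ⟩ := Module.projective_lifting_property f p hf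
  have hφs : Function.Surjective φ :=
    surjective_of_comp_minimal f hmin φ (by rw [hφ]; exact hp)
  obtain ⟨s, hs⟩ := Module.projective_lifting_property φ LinearMap.id hφs
  have hs' : ∀ y, φ (s y) = y := fun y => LinearMap.congr_fun hs y
  have hφ' : ∀ y, f (φ y) = p y := fun y => LinearMap.congr_fun hφ y
  let q : P →ₗ[R] LinearMap.ker φ :=
    (LinearMap.id - s ∘ₗ φ).codRestrict _ (by intro y; simp [hs'])
  have : Module.Projective R (LinearMap.ker φ) :=
    Module.Projective.of_split (LinearMap.ker φ).subtype q (by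
      ext y
      have hy : φ (y : P) = 0 := y.2
      simp [q, hy])
  have : Module.Free R (LinearMap.ker φ) := Module.free_of_flat_of_isLocalRing
  refine ⟨Module.finrank R (LinearMap.ker φ), ⟨?_ ≪≫ₗ
    (LinearEquiv.refl R _).prodCongr (Module.finBasis R (LinearMap.ker φ)).equivFun⟩⟩
  refine LinearEquiv.ofLinearMap
    (((φ ∘ₗ (LinearMap.ker p).subtype).codRestrict (LinearMap.ker f)
      (by intro y; simp [hφ'])).prod (q ∘ₗ (LinearMap.ker p).subtype))
    (((s ∘ₗ (LinearMap.ker f).subtype).coprod (LinearMap.ker φ).subtype).codRestrict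
      (LinearMap.ker p) ?_) ?_ ?_
  · rintro ⟨⟨y, hy⟩, ⟨z, hz⟩⟩
    rw [LinearMap.mem_ker] at hy hz
    simp [← hφ', hs', hy, hz]
  · apply LinearMap.ext
    rintro ⟨⟨y, hy⟩, ⟨z, hz⟩⟩
    rw [LinearMap.mem_ker] at hy hz
    ext
    · change φ (s y + z) _ = y _
      rw [map_add, hs', hz, add_zero]
    · simp [q, hs', hz]
  · ext y
    change s (φ y) + ((y : P) - s (φ y)) = y
    rw [add_sub_cancel]

/-- The kernel of a minimal cover is unique up to isomorphism. -/
lemma nonempty_ker_equiv_of_minimal {k l : ℕ} {M M' : Type u}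
    [AddCommGroup M] [Module R M] [AddCommGroup M'] [Module R M'] (e : M ≃ₗ[R] M')
    (f : (Fin k → R) →ₗ[R] M) (hf : Function.Surjective f)
    (hfmin : LinearMap.ker f ≤ maximalIdeal R • (⊤ : Submodule R (Fin k → R)))
    (g : (Fin l → R) →ₗ[R] M') (hg : Function.Surjective g)
    (hgmin : LinearMap.ker g ≤ maximalIdeal R • (⊤ : Submodule R (Fin l → R))) :
    Nonempty (LinearMap.ker f ≃ₗ[R] LinearMap.ker g) := by
  obtain ⟨φ, hφ⟩ := Module.projective_lifting_property g (e.toLinearMap ∘ₗ f) hg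
  obtain ⟨ψ, hψ⟩ := Module.projective_lifting_property f (e.symm.toLinearMap ∘ₗ g) hf
  have hφs : Function.Surjective φ := surjective_of_comp_minimal g hgmin φ (by
    rw [hφ]; exact e.surjective.comp hf)
  have hψs : Function.Surjective ψ := surjective_of_comp_minimal f hfmin ψ (by
    rw [hψ]; exact e.symm.surjective.comp hg)
  -- `ψ ∘ φ` is a surjective endomorphism of a finite module, hence injective.
  have hinj : Function.Injective (ψ ∘ₗ φ) :=
    OrzechProperty.injective_of_surjective_endomorphism (ψ ∘ₗ φ) (hψs.comp hφs)
  have hφi : Function.Injective φ := Function.Injective.of_comp hinj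
  let E := LinearEquiv.ofBijective φ ⟨hφi, hφs⟩
  have hE : ∀ y, g (E y) = e (f y) := fun y => LinearMap.congr_fun hφ y
  refine ⟨E.ofSubmodules _ _ ?_⟩
  ext z
  constructor
  · rintro ⟨y, hy, rfl⟩
    have hy' : f y = 0 := hy
    change g (E y) = 0
    rw [hE, hy', map_zero]
  · intro hz
    obtain ⟨y, rfl⟩ := E.surjective z
    refine ⟨y, ?_, rfl⟩
    have : g (E y) = 0 := hz
    rw [hE] at this
    exact e.map_eq_zero_iff.mp this

open TensorProduct in
/-- A finite module over a local ring has a minimal cover: lift a basis of `k ⊗ M`. -/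
lemma exists_minimal_cover (M : Type u) [AddCommGroup M] [Module R M] [Module.Finite R M] :
    ∃ (k : ℕ) (f : (Fin k → R) →ₗ[R] M), Function.Surjective f ∧
      LinearMap.ker f ≤ maximalIdeal R • (⊤ : Submodule R (Fin k → R)) := by
  let b := Module.finBasis (ResidueField R) (ResidueField R ⊗[R] M)
  have hsurj : Function.Surjective (TensorProduct.mk R (ResidueField R) M 1) :=
    TensorProduct.mk_surjective R M (ResidueField R) Ideal.Quotient.mk_surjective
  choose m hm using fun i => hsurj (b i)
  have hspan := IsLocalRing.span_eq_top_of_tmul_eq_basis m b hm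
  refine ⟨_, Fintype.linearCombination R m, ?_, ?_⟩
  · rw [← LinearMap.range_eq_top, Fintype.range_linearCombination, hspan]
  · intro a ha
    refine mem_smul_top_of_forall_mem _ a fun i => ?_
    rw [LinearMap.mem_ker, Fintype.linearCombination_apply] at ha
    have h0 : ∑ i, residue R (a i) • b i = 0 := by
      have := congrArg (TensorProduct.mk R (ResidueField R) M 1) ha
      rw [map_sum, map_zero] at this
      rw [← this]
      refine Finset.sum_congr rfl fun j _ => ?_
      rw [map_smul, hm]
      exact algebraMap_smul (ResidueField R) (a j) (b j)
    exact (residue_eq_zero_iff _).mp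
      (Fintype.linearIndependent_iff.mp b.linearIndependent _ h0 i)

end Covers

/-! ### Iterated minimal syzygies -/

/-- `S` is obtained from `M` by `i` times taking the kernel of a minimal free cover. -/
def IsIterSyzygy (R : Type u) [CommRing R] [IsLocalRing R] :
    ℕ → (M : Type u) → [AddCommGroup M] → [Module R M] →
      (S : Type u) → [AddCommGroup S] → [Module R S] → Prop
  | 0, M, _, _, S, _, _ => Nonempty (S ≃ₗ[R] M)
  | i + 1, M, _, _, S, _, _ => ∃ (k : ℕ) (f : (Fin k → R) →ₗ[R] M), Function.Surjective f ∧
      LinearMap.ker f ≤ maximalIdeal R • (⊤ : Submodule R (Fin k → R)) ∧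
      IsIterSyzygy R i (LinearMap.ker f) S

section Syzygies

variable {R : Type u} [CommRing R] [IsLocalRing R]

/-- The truncation of a minimal free resolution of `M` is one of its first syzygy. -/
def MinimalFreeResolution.tail {M : Type u} [AddCommGroup M] [Module R M]
    (F : MinimalFreeResolution R M) : MinimalFreeResolution R (LinearMap.ker F.aug) where
  rank i := F.rank (i + 1)
  aug := (F.d 0).codRestrict _ (fun y => by rw [F.exact_aug]; exact LinearMap.mem_range_self _ y)
  d i := F.d (i + 1)
  aug_surjective := by
    rintro ⟨y, hy⟩
    obtain ⟨z, hz⟩ := F.exact_aug ▸ hy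
    exact ⟨z, Subtype.ext hz⟩
  exact_aug := by rw [LinearMap.ker_codRestrict]; exact F.exact 0
  exact i := F.exact (i + 1)
  minimal i := F.minimal (i + 1)

lemma IsNthSyzygy.isIterSyzygy {i : ℕ} {M S : Type u} [AddCommGroup M] [Module R M]
    [AddCommGroup S] [Module R S] (h : IsNthSyzygy R i M S) : IsIterSyzygy R i M S := by
  induction i generalizing M with
  | zero => exact h.choose_spec
  | succ i ih =>
    obtain ⟨F, hF⟩ := h
    refine ⟨F.rank 0, F.aug, F.aug_surjective, F.exact_aug ▸ F.minimal 0, ih ⟨F.tail, ?_⟩⟩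
    match i, hF with
    | 0, hF => exact hF
    | 1, ⟨e⟩ => exact ⟨e ≪≫ₗ LinearEquiv.ofEq _ _ (LinearMap.ker_codRestrict _ _ _).symm⟩
    | j + 2, hF => exact hF

lemma IsIterSyzygy.unique {i : ℕ} {M M' S S' : Type u} [AddCommGroup M] [Module R M]
    [AddCommGroup M'] [Module R M'] [AddCommGroup S] [Module R S] [AddCommGroup S'] [Module R S']
    (e : M ≃ₗ[R] M') (h : IsIterSyzygy R i M S) (h' : IsIterSyzygy R i M' S') :
    Nonempty (S ≃ₗ[R] S') := by
  induction i generalizing M M' with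
  | zero =>
    obtain ⟨a⟩ := h
    obtain ⟨b⟩ := h'
    exact ⟨a ≪≫ₗ e ≪≫ₗ b.symm⟩
  | succ i ih =>
    obtain ⟨k, f, hf, hfm, hS⟩ := h
    obtain ⟨l, g, hg, hgm, hS'⟩ := h'
    obtain ⟨E⟩ := nonempty_ker_equiv_of_minimal e f hf hfm g hg hgm
    exact ih E hS hS'

lemma exists_isIterSyzygy [IsNoetherianRing R] (i : ℕ) (M : Type u) [AddCommGroup M] [Module R M]
    [Module.Finite R M] :
    ∃ (S : Type u) (_ : AddCommGroup S) (_ : Module R S), IsIterSyzygy R i M S := by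
  induction i generalizing M with
  | zero => exact ⟨M, inferInstance, inferInstance, ⟨LinearEquiv.refl R M⟩⟩
  | succ i ih =>
    obtain ⟨k, f, hf, hfm⟩ := exists_minimal_cover (R := R) M
    obtain ⟨S, _, _, hS⟩ := ih (LinearMap.ker f)
    exact ⟨S, _, _, k, f, hf, hfm, hS⟩

/-! ### Shifting syzygies along a short exact sequence -/

/-- If `0 → S → F → S' → 0` is exact and `pd F ≤ w`, then `Ω^w S ≅ Ω^{w+1} S' ⊕ R^v`. -/
lemma IsIterSyzygy.shift_of_exact [IsNoetherianRing R] {w : ℕ} {S F S' T V : Type u}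
    [AddCommGroup S] [Module R S] [AddCommGroup F] [Module R F] [AddCommGroup S'] [Module R S']
    [AddCommGroup T] [Module R T] [AddCommGroup V] [Module R V] [Module.Finite R F]
    (ι : S →ₗ[R] F) (hι : Function.Injective ι) (π : F →ₗ[R] S') (hπ : Function.Surjective π)
    (hex : Function.Exact ι π) (hpd : HasProjectiveDimensionLT (ModuleCat.of R F) (w + 1))
    (hT : IsIterSyzygy R w S T) (hV : IsIterSyzygy R (w + 1) S' V) :
    ∃ v : ℕ, Nonempty (T ≃ₗ[R] (V × (Fin v → R))) := by
  induction w generalizing S F S' with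
  | zero =>
    have : Module.Projective R F := (IsProjective.iff_projective F).mpr
      (projective_iff_hasProjectiveDimensionLT_one.mpr hpd)
    obtain ⟨a⟩ := hT
    obtain ⟨k, f, hf, hfm, ⟨b⟩⟩ := hV
    obtain ⟨v, ⟨c⟩⟩ := exists_ker_equiv_ker_prod f hf hfm π hπ
    refine ⟨v, ⟨a ≪≫ₗ LinearEquiv.ofInjective ι hι ≪≫ₗ
      LinearEquiv.ofEq _ _ hex.linearMap_ker_eq.symm ≪≫ₗ c ≪≫ₗ
      b.symm.prodCongr (LinearEquiv.refl R _)⟩⟩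
  | succ w ih =>
    obtain ⟨k, f, hf, -, hT⟩ := hT
    obtain ⟨l, g, hg, hgm, hV⟩ := hV
    obtain ⟨h, hh⟩ := Module.projective_lifting_property π g hπ
    have hh' : ∀ y, π (h y) = g y := fun y => LinearMap.congr_fun hh y
    have hπι : ∀ y, π (ι y) = 0 := fun y => hex.apply_apply_eq_zero y
    let H : (Fin k → R) × (Fin l → R) →ₗ[R] F := (ι ∘ₗ f).coprod h
    have hH : ∀ a b, H (a, b) = ι (f a) + h b := fun a b => rfl
    have hHs : Function.Surjective H := by
      intro y
      obtain ⟨b, hb⟩ := hg (π y)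
      obtain ⟨s, hs⟩ := (hex (y - h b)).mp (by rw [map_sub, hh', hb, sub_self])
      obtain ⟨a, rfl⟩ := hf s
      exact ⟨(a, b), by rw [hH, hs, sub_add_cancel]⟩
    have hproj : Projective (ModuleCat.of R ((Fin k → R) × (Fin l → R))) :=
      (IsProjective.iff_projective _).mp inferInstance
    have hK : HasProjectiveDimensionLT (ModuleCat.of R (LinearMap.ker H)) (w + 1) :=
      ((LinearMap.shortExact_shortComplexKer hHs).hasProjectiveDimensionLT_X₃_iff w hproj).mp hpd
    refine ih (S := LinearMap.ker f) (F := LinearMap.ker H) (S' := LinearMap.ker g)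
      ((LinearMap.inl R _ _ ∘ₗ (LinearMap.ker f).subtype).codRestrict _ ?_) ?_
      ((LinearMap.snd R _ _ ∘ₗ (LinearMap.ker H).subtype).codRestrict _ ?_) ?_ ?_ hK hT hV
    · rintro ⟨a, ha⟩
      rw [LinearMap.mem_ker] at ha
      change H (a, 0) = 0
      rw [hH, ha, map_zero, map_zero, add_zero]
    · intro a a' haa
      have := congrArg (fun z : LinearMap.ker H => z.1.1) haa
      exact Subtype.ext this
    · rintro ⟨⟨a, b⟩, hab⟩
      rw [LinearMap.mem_ker, hH] at hab
      have := congrArg π hab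
      rw [map_add, hπι, hh', zero_add, map_zero] at this
      exact this
    · rintro ⟨b, hb⟩
      rw [LinearMap.mem_ker] at hb
      obtain ⟨s, hs⟩ := (hex (h b)).mp (by rw [hh', hb])
      obtain ⟨a, rfl⟩ := hf s
      refine ⟨⟨(-a, b), ?_⟩, rfl⟩
      rw [LinearMap.mem_ker, hH, map_neg, map_neg, hs, neg_add_cancel]
    · rintro ⟨⟨a, b⟩, hab⟩
      constructor
      · intro hb
        have hb' : b = 0 := congrArg Subtype.val hb
        subst hb'
        rw [LinearMap.mem_ker, hH, map_zero, add_zero] at hab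
        exact ⟨⟨a, hι (by rw [hab, map_zero])⟩, rfl⟩
      · rintro ⟨c, hc⟩
        have := congrArg (fun z : LinearMap.ker H => z.1.2) hc
        exact Subtype.ext this.symm

end Syzygies

/-! ### Syzygies over the quotient by a regular sequence -/

lemma hasProjectiveDimensionLT_pi {R : Type u} [CommRing R] (A : Type u) [AddCommGroup A]
    [Module R A] (n k : ℕ) (h : HasProjectiveDimensionLT (ModuleCat.of R A) (n + 1)) :
    HasProjectiveDimensionLT (ModuleCat.of R (Fin k → A)) (n + 1) := by
  induction k with
  | zero =>
    have : Projective (ModuleCat.of R (Fin 0 → A)) :=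
      (IsProjective.iff_projective _).mp inferInstance
    exact hasProjectiveDimensionLT_of_ge _ 1 _ (by lia)
  | succ k ih =>
    have hS := ModuleCat.shortComplex_shortExact
      (ModuleCat.shortComplexOfCompEqZero (LinearMap.inl R A (Fin k → A))
        (LinearMap.snd R A (Fin k → A)) (LinearMap.snd_comp_inl R A _))
      Function.Exact.inl_snd LinearMap.inl_injective LinearMap.snd_surjective
    have hprod := hS.hasProjectiveDimensionLT_X₂ (n + 1) h ih
    exact hasProjectiveDimensionLT_of_iso
      (Fin.consLinearEquiv R (fun _ : Fin (k + 1) => A)).toModuleIso (n + 1)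

lemma hasProjectiveDimensionLT_quotient {R : Type u} [CommRing R] [IsNoetherianRing R]
    [IsLocalRing R] (x : List R) (hreg : RingTheory.Sequence.IsRegular R x) :
    HasProjectiveDimensionLT (ModuleCat.of R (R ⧸ Ideal.ofList x)) (x.length + 1) := by
  have h := (projectiveDimension_le_iff _ _).mp
    (ModuleCat.projectiveDimension_quotient_eq_length.{u} x hreg).le
  exact hasProjectiveDimensionLT_of_iso
    (Shrink.linearEquiv R (R ⧸ Ideal.ofList x)).toModuleIso (x.length + 1)

/-- The theorem for iterated syzygies, by induction on `t`. -/
lemma IsIterSyzygy.over_quotient {R : Type u} [CommRing R] [IsNoetherianRing R] [IsLocalRing R]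
    (x : List R) (hreg : RingTheory.Sequence.IsRegular R x)
    [IsLocalRing (R ⧸ Ideal.ofList x)] (w : ℕ) (hw : x.length ≤ w)
    (S : Type u) [AddCommGroup S] [Module (R ⧸ Ideal.ofList x) S] [Module R S]
    [IsScalarTower R (R ⧸ Ideal.ofList x) S]
    (T : Type u) [AddCommGroup T] [Module R T] (hT : IsIterSyzygy R w S T) (t : ℕ)
    (M : Type u) [AddCommGroup M] [Module (R ⧸ Ideal.ofList x) M] [Module R M]
    [IsScalarTower R (R ⧸ Ideal.ofList x) M]
    (V : Type u) [AddCommGroup V] [Module R V]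
    (hS : IsIterSyzygy (R ⧸ Ideal.ofList x) t M S) (hV : IsIterSyzygy R (w + t) M V) :
    ∃ v : ℕ, Nonempty (T ≃ₗ[R] (V × (Fin v → R))) := by
  induction t generalizing M V with
  | zero =>
    obtain ⟨e⟩ := hS
    obtain ⟨E⟩ := IsIterSyzygy.unique (e.restrictScalars R) hT hV
    exact ⟨0, ⟨E ≪≫ₗ LinearEquiv.prodUnique.symm⟩⟩
  | succ t ih =>
    obtain ⟨k, f, hf, -, hS⟩ := hS
    have : IsNoetherian R (Fin k → R ⧸ Ideal.ofList x) := inferInstance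
    have : Module.Finite R (LinearMap.ker f) :=
      Module.Finite.of_injective ((LinearMap.ker f).subtype.restrictScalars R)
        Subtype.val_injective
    -- `N` is the syzygy `Ω_R^{w+t} (Ω_A M)` interpolating between `T` and `V`.
    obtain ⟨N, _, _, hN⟩ := exists_isIterSyzygy (R := R) (w + t) (LinearMap.ker f)
    obtain ⟨v₁, ⟨e₁⟩⟩ := ih (LinearMap.ker f) N hS hN
    have hpd : HasProjectiveDimensionLT (ModuleCat.of R (Fin k → R ⧸ Ideal.ofList x))
        (w + t + 1) := by
      have := hasProjectiveDimensionLT_pi _ _ k (hasProjectiveDimensionLT_quotient x hreg)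
      exact hasProjectiveDimensionLT_of_ge _ (x.length + 1) _ (by lia)
    obtain ⟨v₂, ⟨e₂⟩⟩ := IsIterSyzygy.shift_of_exact
      ((LinearMap.ker f).subtype.restrictScalars R) Subtype.val_injective
      (f.restrictScalars R) hf (LinearMap.exact_subtype_ker_map f) hpd hN hV
    refine ⟨v₂ + v₁, ⟨e₁ ≪≫ₗ e₂.prodCongr (LinearEquiv.refl R _) ≪≫ₗ
      LinearEquiv.prodAssoc R _ _ _ ≪≫ₗ (LinearEquiv.refl R _).prodCongr ?_⟩⟩
    exact (LinearEquiv.sumArrowLequivProdArrow _ _ R R).symm ≪≫ₗ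
      LinearEquiv.funCongrLeft R R finSumFinEquiv.symm

/-- **Lemma 4.3.** Let `𝐱` be an `R`-regular sequence annihilating `M` (so `M` is an `R/(𝐱)`-module).
For `t ≥ 0` and `u ≥ n = length 𝐱` there is `v ≥ 0` with
`Ω_R^u (Ω_{R/(𝐱)}^t M) ≅ Ω_R^{u+t} M ⊕ R^{⊕v}`. -/
theorem syzygy_over_quotient_syzygy
    (R : Type u) [CommRing R] [IsNoetherianRing R] [IsLocalRing R]
    (x : List R) (hreg : RingTheory.Sequence.IsRegular R x)
    [IsLocalRing (R ⧸ Ideal.ofList x)] [IsNoetherianRing (R ⧸ Ideal.ofList x)]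
    (M : Type u) [AddCommGroup M] [Module (R ⧸ Ideal.ofList x) M] [Module R M]
    [IsScalarTower R (R ⧸ Ideal.ofList x) M] [Module.Finite R M]
    (t w : ℕ) (hw : x.length ≤ w) :
    ∀ (S : Type u) [AddCommGroup S] [Module (R ⧸ Ideal.ofList x) S] [Module R S]
      [IsScalarTower R (R ⧸ Ideal.ofList x) S]
      (T U : Type u) [AddCommGroup T] [Module R T] [AddCommGroup U] [Module R U],
      IsNthSyzygy (R ⧸ Ideal.ofList x) t M S →
      IsNthSyzygy R w S T → IsNthSyzygy R (w + t) M U →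
      ∃ v : ℕ, Nonempty (T ≃ₗ[R] (U × (Fin v → R))) := by
  intro S _ _ _ _ T U _ _ _ _ hS hT hU
  exact IsIterSyzygy.over_quotient x hreg w hw S T hT.isIterSyzygy t M U hS.isIterSyzygy
    hU.isIterSyzygy
end

section
/- Let (R, 𝔪) be a commutative noetherian local ring, M a finitely generated R-module, and 𝐱 an M-regular sequence of length n ≥ 0. Then the syzygy Ω_R^i(M/𝐱M) belongs to the resolving closure res M of M for every i ≥ n. -/
/-!
For a class `P` of modules, let `SyzygyIn P` be the class of finitely generated modules whose first
syzygies (kernels of arbitrary surjections from finite free modules) lie in `P`. Let `P` be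
resolving.

* If `0 → K → E → B → 0` is exact with `E ∈ P` and `B ∈ SyzygyIn P`, then `K ∈ P`
  (`IsResolvingSubcat.ker_mem`): the pullback of `E → B` along a free cover `R^k → B` is an
  extension of `E` by a syzygy of `B`, and it contains `K` as a direct summand.
* Consequently `SyzygyIn P` is again resolving and contains `P` (`IsResolvingSubcat.syzygyIn`,
  `IsResolvingSubcat.mem_syzygyIn`).
* If `0 → A → B → C → 0` is exact with `A, B ∈ P`, then `C ∈ SyzygyIn P`
  (`IsResolvingSubcat.coker_mem_syzygyIn`).

The last point applied to `0 → M → M → M/aM → 0` shows that dividing by a regular element moves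
a module from `P` to `SyzygyIn P`. Since `SyzygyIn P` is resolving, this can be iterated along the
regular sequence, so `M/𝐱M` lies in the `n`-fold iterate of `SyzygyIn` at `P`, hence in the `i`-fold
iterate for `i ≥ n`. This says that the `i`-th syzygies of `M/𝐱M` lie in `P`.
-/

universe u

open IsLocalRing CategoryTheory

/-- A resolving subcategory of `mod R` (the finitely generated `R`-modules): a collection of
(f.g.) modules, closed under isomorphism, containing `R`, closed under direct summands,
extensions, and syzygies (kernels of epimorphisms from finite free modules). -/
structure IsResolvingSubcat (R : Type u) [CommRing R] (P : ModuleCat.{u} R → Prop) : Prop where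
  fg : ∀ A, P A → Module.Finite R A
  iso_closed : ∀ A B : ModuleCat.{u} R, Nonempty (A ≃ₗ[R] B) → P A → P B
  contains_ring : P (ModuleCat.of R R)
  summand_closed : ∀ A B : ModuleCat.{u} R,
    (∃ (ι : B →ₗ[R] A) (π : A →ₗ[R] B), π.comp ι = LinearMap.id) → P A → P B
  ext_closed : ∀ (A B C : ModuleCat.{u} R) (f : A →ₗ[R] B) (g : B →ₗ[R] C),
    Function.Injective f → Function.Surjective g → LinearMap.ker g = LinearMap.range f →
    P A → P C → P B
  syzygy_closed : ∀ (B : ModuleCat.{u} R) (m : ℕ) (f : (Fin m → R) →ₗ[R] B),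
    Function.Surjective f → P B → P (ModuleCat.of R (LinearMap.ker f))

/-! ### Modules with syzygies in a given class -/

section Resolving

variable {R : Type u} [CommRing R]

/-- The class of finitely generated modules all of whose first syzygies lie in `P`, where every
surjection from a finite free module is allowed, minimal or not. -/
def SyzygyIn (P : ModuleCat.{u} R → Prop) (N : ModuleCat.{u} R) : Prop :=
  Module.Finite R N ∧ ∀ (m : ℕ) (f : (Fin m → R) →ₗ[R] N), Function.Surjective f →
    P (ModuleCat.of R (LinearMap.ker f))

variable {P : ModuleCat.{u} R → Prop}

/-- `SyzygyIn P` controls kernels of surjections from any finite free module, not only from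
`Fin m → R`. -/
lemma SyzygyIn.ker_mem_of_free (hP : IsResolvingSubcat R P) {N F : Type u} [AddCommGroup N]
    [Module R N] [AddCommGroup F] [Module R F] [Module.Free R F] [Module.Finite R F]
    (hN : SyzygyIn P (ModuleCat.of R N)) (f : F →ₗ[R] N) (hf : Function.Surjective f) :
    P (ModuleCat.of R (LinearMap.ker f)) := by
  obtain ⟨m, ⟨e⟩⟩ : ∃ m : ℕ, Nonempty ((Fin m → R) ≃ₗ[R] F) := by
    cases subsingleton_or_nontrivial R
    · have := Module.subsingleton R F
      exact ⟨0, ⟨0, 0, fun _ => Subsingleton.elim _ _, fun _ => Subsingleton.elim _ _⟩⟩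
    · exact ⟨_, ⟨(Module.finBasis R F).equivFun.symm⟩⟩
  have h := hN.2 m (f ∘ₗ e.toLinearMap) (hf.comp e.surjective)
  refine hP.iso_closed _ _ ⟨?_⟩ h
  exact LinearEquiv.ofSubmodules e _ _ (by
    ext y
    simp only [Submodule.mem_map, LinearMap.mem_ker]
    exact ⟨by rintro ⟨z, hz, rfl⟩; exact hz, fun hy => ⟨e.symm y, by simpa using hy, by simp⟩⟩)

open scoped Pointwise

/-! ### Resolving classes are stable under `SyzygyIn` -/

namespace IsResolvingSubcat

lemma free_mem (hP : IsResolvingSubcat R P) (m : ℕ) : P (ModuleCat.of R (Fin m → R)) := by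
  induction m with
  | zero =>
    exact hP.summand_closed (ModuleCat.of R R) _ ⟨0, 0, Subsingleton.elim _ _⟩ hP.contains_ring
  | succ m ih =>
    refine hP.ext_closed (ModuleCat.of R R) _ _ (LinearMap.single R (fun _ : Fin (m + 1) => R) 0)
      (LinearMap.funLeft R R Fin.succ)
      (Pi.single_injective (M := fun _ : Fin (m + 1) => R) 0) ?_ ?_ hP.contains_ring ih
    · exact LinearMap.funLeft_surjective_of_injective _ _ _ (Fin.succ_injective _)
    · ext v
      rw [LinearMap.mem_ker, LinearMap.mem_range]
      constructor
      · intro h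
        refine ⟨v 0, ?_⟩
        ext j
        refine Fin.cases ?_ (fun j => ?_) j
        · simp
        · have hj : v j.succ = 0 := congrFun h j
          simp [hj]
      · rintro ⟨a, rfl⟩
        funext j
        change (Pi.single 0 a : Fin (m + 1) → R) j.succ = 0
        simp

lemma mem_syzygyIn (hP : IsResolvingSubcat R P) (N : ModuleCat.{u} R) (hN : P N) :
    SyzygyIn P N :=
  ⟨hP.fg N hN, fun m f hf => hP.syzygy_closed N m f hf hN⟩

/-- The kernel of a surjection `E → B` with `E ∈ P` and first syzygies of `B` in `P` lies in `P`. -/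
lemma ker_mem (hP : IsResolvingSubcat R P) {E B : Type u} [AddCommGroup E] [Module R E]
    [AddCommGroup B] [Module R B] (g : E →ₗ[R] B) (hg : Function.Surjective g)
    (hE : P (ModuleCat.of R E)) (hB : SyzygyIn P (ModuleCat.of R B)) :
    P (ModuleCat.of R (LinearMap.ker g)) := by
  have : Module.Finite R B := hB.1
  obtain ⟨k, q, hq⟩ := Module.Finite.exists_fin' R B
  obtain ⟨s, hs⟩ := Module.projective_lifting_property g q hg
  -- the pullback of `g` and `q`, an extension of `E` by `ker q`
  let G := LinearMap.ker (g ∘ₗ LinearMap.fst R E (Fin k → R) - q ∘ₗ LinearMap.snd R E (Fin k → R))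
  have memG (z : E × (Fin k → R)) : z ∈ G ↔ g z.1 = q z.2 := by
    simp [G, LinearMap.mem_ker, sub_eq_zero]
  have hG : P (ModuleCat.of R G) := by
    refine hP.ext_closed (ModuleCat.of R (LinearMap.ker q)) _ (ModuleCat.of R E)
      ((LinearMap.inr R E (Fin k → R) ∘ₗ (LinearMap.ker q).subtype).codRestrict G ?_)
      (LinearMap.fst R E (Fin k → R) ∘ₗ G.subtype) ?_ ?_ ?_ (hB.2 k q hq) hE
    · intro v
      rw [memG]
      simp
    · intro v w h
      have h' := congrArg (fun z : G => z.1.2) h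
      exact Subtype.ext h'
    · intro e
      obtain ⟨v, hv⟩ := hq (g e)
      exact ⟨⟨(e, v), (memG _).2 hv.symm⟩, rfl⟩
    · ext ⟨⟨e, v⟩, hz⟩
      have hz' := (memG _).1 hz
      rw [LinearMap.mem_ker, LinearMap.mem_range]
      constructor
      · intro h
        have h0 : e = 0 := h
        subst h0
        exact ⟨⟨v, by simpa using hz'.symm⟩, rfl⟩
      · rintro ⟨w, hw⟩
        have := congrArg (fun z : G => z.1.1) hw
        exact this.symm
  -- the lift `s` of `q` splits off `ker g` from the pullback
  refine hP.summand_closed _ _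
    ⟨(LinearMap.inl R E (Fin k → R) ∘ₗ (LinearMap.ker g).subtype).codRestrict G ?_,
    ((LinearMap.fst R E (Fin k → R) - s ∘ₗ LinearMap.snd R E (Fin k → R)) ∘ₗ
      G.subtype).codRestrict (LinearMap.ker g) ?_, ?_⟩ hG
  · intro v
    rw [memG]
    simp
  · rintro ⟨⟨e, v⟩, hz⟩
    have hz' := (memG _).1 hz
    have := LinearMap.congr_fun hs v
    simp only [LinearMap.comp_apply] at this
    simp [LinearMap.mem_ker, this, hz']
  · ext v
    simp

/-- In an exact sequence `0 → A → B → C → 0` with `A, B ∈ P`, the syzygies of `C` lie in `P`. -/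
lemma coker_mem_syzygyIn (hP : IsResolvingSubcat R P) {A B C : Type u} [AddCommGroup A]
    [Module R A] [AddCommGroup B] [Module R B] [AddCommGroup C] [Module R C]
    (f : A →ₗ[R] B) (g : B →ₗ[R] C) (hf : Function.Injective f) (hg : Function.Surjective g)
    (hfg : LinearMap.ker g = LinearMap.range f)
    (hA : P (ModuleCat.of R A)) (hB : P (ModuleCat.of R B)) :
    SyzygyIn P (ModuleCat.of R C) := by
  have : Module.Finite R B := hP.fg _ hB
  refine ⟨Module.Finite.of_surjective g hg, fun m h hh => ?_⟩
  change (Fin m → R) →ₗ[R] C at h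
  -- the pullback of `g` and `h` is an extension of `R^m` by `A`, and it maps onto `B` with
  -- kernel `ker h`
  let E := LinearMap.ker (g ∘ₗ LinearMap.fst R B (Fin m → R) - h ∘ₗ LinearMap.snd R B (Fin m → R))
  have memE (z : B × (Fin m → R)) : z ∈ E ↔ g z.1 = h z.2 := by
    simp [E, LinearMap.mem_ker, sub_eq_zero]
  have hgf (a : A) : g (f a) = 0 := by
    rw [← LinearMap.mem_ker, hfg]
    exact ⟨a, rfl⟩
  have hE : P (ModuleCat.of R E) := by
    refine hP.ext_closed (ModuleCat.of R A) _ (ModuleCat.of R (Fin m → R))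
      ((LinearMap.inl R B (Fin m → R) ∘ₗ f).codRestrict E ?_)
      (LinearMap.snd R B (Fin m → R) ∘ₗ E.subtype) ?_ ?_ ?_ hA (hP.free_mem m)
    · intro a
      rw [memE]
      simp [hgf]
    · intro v w h
      exact hf (congrArg (fun z : E => z.1.1) h)
    · intro v
      obtain ⟨b, hb⟩ := hg (h v)
      exact ⟨⟨(b, v), (memE _).2 hb⟩, rfl⟩
    · ext ⟨⟨b, v⟩, hz⟩
      have hz' := (memE _).1 hz
      rw [LinearMap.mem_ker, LinearMap.mem_range]
      constructor
      · intro h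
        have h0 : v = 0 := h
        subst h0
        have hb : b ∈ LinearMap.ker g := by simpa using hz'
        rw [hfg] at hb
        obtain ⟨a, rfl⟩ := hb
        exact ⟨a, rfl⟩
      · rintro ⟨w, hw⟩
        have := congrArg (fun z : E => z.1.2) hw
        exact this.symm
  have hK := hP.ker_mem (LinearMap.fst R B (Fin m → R) ∘ₗ E.subtype)
    (fun b => by
      obtain ⟨v, hv⟩ := hh (g b)
      exact ⟨⟨(b, v), (memE _).2 hv.symm⟩, rfl⟩) hE (hP.mem_syzygyIn _ hB)
  refine hP.summand_closed _ _
    ⟨((LinearMap.inr R B (Fin m → R) ∘ₗ (LinearMap.ker h).subtype).codRestrict E ?_).codRestrict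
      _ ?_,
    (LinearMap.snd R B (Fin m → R) ∘ₗ E.subtype ∘ₗ Submodule.subtype _).codRestrict
      (LinearMap.ker h) ?_, ?_⟩ hK
  · intro v
    rw [memE]
    simp
  · intro v
    rfl
  · rintro ⟨⟨⟨b, v⟩, hz⟩, hb⟩
    have hz' := (memE _).1 hz
    have h0 : b = 0 := hb
    subst h0
    simpa using hz'.symm
  · rfl

/-- The modules with first syzygies in a resolving class form a resolving class; this is what makes
the induction along a regular sequence possible. -/
lemma syzygyIn (hP : IsResolvingSubcat R P) : IsResolvingSubcat R (SyzygyIn P) where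
  fg _ hA := hA.1
  iso_closed A B := by
    rintro ⟨e⟩ ⟨h1, h2⟩
    refine ⟨Module.Finite.equiv e, fun m f hf => ?_⟩
    have h := h2 m (e.symm.toLinearMap ∘ₗ f) (e.symm.surjective.comp hf)
    rwa [LinearEquiv.ker_comp] at h
  contains_ring := hP.mem_syzygyIn _ hP.contains_ring
  summand_closed A B := by
    rintro ⟨ι, π, hπ⟩ hA
    have hπ' (b : B) : π (ι b) = b := LinearMap.congr_fun hπ b
    have : Module.Finite R A := hA.1
    refine ⟨Module.Finite.of_surjective π fun b => ⟨ι b, hπ' b⟩, fun m f hf => ?_⟩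
    -- the projection of `A` onto the complementary summand `ker π`
    let ρ : A →ₗ[R] LinearMap.ker π := (LinearMap.id - ι ∘ₗ π).codRestrict _ (by
      intro a
      simp [LinearMap.mem_ker, hπ'])
    have : Module.Finite R (LinearMap.ker π) := Module.Finite.of_surjective ρ (by
      rintro ⟨a, ha⟩
      refine ⟨a, Subtype.ext ?_⟩
      have ha' : π a = 0 := ha
      simp [ρ, ha'])
    obtain ⟨k, q, hq⟩ := Module.Finite.exists_fin' R (LinearMap.ker π)
    -- a free cover of `A`, the direct sum of the free covers `f` and `q` of the two summands
    let h : ((Fin m → R) × (Fin k → R)) →ₗ[R] A :=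
      (ι ∘ₗ f).coprod ((LinearMap.ker π).subtype ∘ₗ q)
    have hh : Function.Surjective h := by
      intro a
      obtain ⟨v, hv⟩ := hf (π a)
      obtain ⟨w, hw⟩ := hq (ρ a)
      refine ⟨(v, w), ?_⟩
      simp [h, hv, hw, ρ]
    have hK := SyzygyIn.ker_mem_of_free (N := A) hP hA h hh
    refine hP.summand_closed _ _
      ⟨(LinearMap.inl R (Fin m → R) (Fin k → R) ∘ₗ (LinearMap.ker f).subtype).codRestrict
        (LinearMap.ker h) ?_,
      (LinearMap.fst R (Fin m → R) (Fin k → R) ∘ₗ (LinearMap.ker h).subtype).codRestrict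
        (LinearMap.ker f) ?_, ?_⟩ hK
    · intro v
      simp [LinearMap.mem_ker, h]
    · rintro ⟨⟨v, w⟩, hz⟩
      have hz' : ι (f v) + (q w : A) = 0 := hz
      have h2 := congrArg π hz'
      have h3 : π (q w : A) = 0 := (q w).2
      simpa [hπ', h3] using h2
    · rfl
  ext_closed A B C f g hf hg hfg hA hC := by
    have : Module.Finite R A := hA.1
    have : Module.Finite R C := hC.1
    have : Module.Finite R (B ⧸ LinearMap.range f) :=
      hfg ▸ Module.Finite.equiv (g.quotKerEquivOfSurjective hg).symm
    refine ⟨Module.Finite.of_submodule_quotient (LinearMap.range f), fun m h hh => ?_⟩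
    have hgf (a : A) : g (f a) = 0 := by
      rw [← LinearMap.mem_ker, hfg]
      exact ⟨a, rfl⟩
    -- `h` restricts to a surjection from the syzygy `ker (g ∘ h)` of `C` onto `A`, with kernel
    -- `ker h`
    let L := LinearMap.ker (g ∘ₗ h)
    have hL : P (ModuleCat.of R L) := hC.2 m (g ∘ₗ h) (hg.comp hh)
    let e := LinearEquiv.ofInjective f hf
    let p : L →ₗ[R] A := e.symm.toLinearMap ∘ₗ (h ∘ₗ L.subtype).codRestrict (LinearMap.range f)
      (fun v => by rw [← hfg]; exact v.2)
    have hp (v : L) : f (p v) = h v.1 := by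
      have : e (p v) = ⟨h v.1, by rw [← hfg]; exact v.2⟩ := by
        simp only [p, LinearMap.comp_apply, LinearEquiv.coe_coe, LinearEquiv.apply_symm_apply]
        rfl
      exact congrArg Subtype.val this
    have hK := hP.ker_mem (B := A) p (fun a => by
      obtain ⟨v, hv⟩ := hh (f a)
      refine ⟨⟨v, ?_⟩, hf ?_⟩
      · simp [L, LinearMap.mem_ker, hv, hgf]
      · rw [hp, hv]) hL hA
    refine hP.summand_closed _ _
      ⟨((LinearMap.ker h).subtype.codRestrict L ?_).codRestrict (LinearMap.ker p) ?_,
      (L.subtype ∘ₗ (LinearMap.ker p).subtype).codRestrict (LinearMap.ker h) ?_, ?_⟩ hK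
    · intro v
      simp [L, LinearMap.mem_ker]
    · intro v
      rw [LinearMap.mem_ker]
      apply hf
      exact (hp _).trans ((LinearMap.mem_ker.1 v.2).trans (map_zero f).symm)
    · rintro ⟨v, hv⟩
      have hv' : p v = 0 := hv
      have := hp v
      rw [hv', map_zero] at this
      exact this.symm
    · rfl
  syzygy_closed B m f hf hB := hP.mem_syzygyIn _ (hB.2 m f hf)

/-! ### Iterated syzygies and regular sequences -/

lemma iterate_syzygyIn (hP : IsResolvingSubcat R P) (n : ℕ) :
    IsResolvingSubcat R (SyzygyIn^[n] P) := by
  induction n with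
  | zero => exact hP
  | succ n ih => rw [Function.iterate_succ_apply']; exact ih.syzygyIn

lemma iterate_syzygyIn_mono (hP : IsResolvingSubcat R P) {n i : ℕ} (h : n ≤ i)
    (N : ModuleCat.{u} R) (hN : (SyzygyIn^[n] P) N) : (SyzygyIn^[i] P) N := by
  induction i, h using Nat.le_induction with
  | base => exact hN
  | succ i _ ih =>
    rw [Function.iterate_succ_apply']
    exact (hP.iterate_syzygyIn i).mem_syzygyIn _ ih

lemma quotSMulTop_mem (hP : IsResolvingSubcat R P) {M : Type u} [AddCommGroup M] [Module R M]
    (hM : P (ModuleCat.of R M)) (a : R) (ha : IsSMulRegular M a) :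
    SyzygyIn P (ModuleCat.of R (QuotSMulTop a M)) := by
  refine hP.coker_mem_syzygyIn (LinearMap.lsmul R M a) (Submodule.mkQ _)
    ha (Submodule.mkQ_surjective _) ?_ hM hM
  ext y
  simp [Submodule.mem_smul_pointwise_iff_exists]

/-- Dividing by a weakly regular sequence of length `n` costs `n` syzygies. The induction replaces
`(P, M)` by `(SyzygyIn P, M/aM)`, where `a` is the first element of the sequence. -/
lemma quotient_mem (hP : IsResolvingSubcat R P) {M : Type u} [AddCommGroup M] [Module R M]
    (hM : P (ModuleCat.of R M)) (x : List R) (hx : RingTheory.Sequence.IsWeaklyRegular M x) :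
    (SyzygyIn^[x.length] P)
      (ModuleCat.of R (M ⧸ (Ideal.ofList x • ⊤ : Submodule R M))) := by
  induction x generalizing P M with
  | nil =>
    exact hP.iso_closed (ModuleCat.of R M) _
      ⟨(Submodule.quotEquivOfEqBot _ (by simp)).symm⟩ hM
  | cons a x ih =>
    rw [RingTheory.Sequence.isWeaklyRegular_cons_iff] at hx
    have h := ih hP.syzygyIn (hP.quotSMulTop_mem hM a hx.1) hx.2
    rw [List.length_cons, Function.iterate_succ_apply]
    exact (hP.syzygyIn.iterate_syzygyIn _).iso_closed _ _
      ⟨(Submodule.quotOfListConsSMulTopEquivQuotSMulTopInner M a x).symm⟩ h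

end IsResolvingSubcat

/-! ### Syzygies read off from a minimal free resolution -/

/-- If `R^m → R^k` has image the submodule `N ∈ SyzygyIn P`, then its kernel lies in `P`. -/
lemma SyzygyIn.ker_mem_of_range_eq {m k : ℕ} {N : Submodule R (Fin k → R)}
    (hN : SyzygyIn P (ModuleCat.of R N)) (f : (Fin m → R) →ₗ[R] (Fin k → R))
    (hf : N = LinearMap.range f) : P (ModuleCat.of R (LinearMap.ker f)) := by
  subst hf
  have h := hN.2 m f.rangeRestrict f.surjective_rangeRestrict
  rwa [LinearMap.ker_rangeRestrict] at h

/-- The shift by two reflects that `ker (d j)` is the `(j + 2)`-nd syzygy. -/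
lemma MinimalFreeResolution.ker_d_mem [IsLocalRing R] {N : Type u} [AddCommGroup N] [Module R N]
    (F : MinimalFreeResolution R N) (j : ℕ) (hN : (SyzygyIn^[j + 2] P) (ModuleCat.of R N)) :
    P (ModuleCat.of R (LinearMap.ker (F.d j))) := by
  induction j generalizing P with
  | zero =>
    have h : SyzygyIn P (ModuleCat.of R (LinearMap.ker F.aug)) := hN.2 _ F.aug F.aug_surjective
    exact h.ker_mem_of_range_eq _ F.exact_aug
  | succ j ih =>
    exact (ih (P := SyzygyIn P) hN).ker_mem_of_range_eq _ (F.exact j)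

end Resolving

/-- **Lemma 4.4.** If `𝐱` is an `M`-regular sequence of length `n`, then `Ω_R^i (M/𝐱M)` belongs to
the resolving closure `res M` for every `i ≥ n`. -/
theorem syzygy_of_quotient_mem_resolving_closure
    (R : Type u) [CommRing R] [IsNoetherianRing R] [IsLocalRing R]
    (M : Type u) [AddCommGroup M] [Module R M] [Module.Finite R M]
    (x : List R) (hx : RingTheory.Sequence.IsRegular M x)
    (i : ℕ) (hi : x.length ≤ i) :
    ∀ (S : Type u) [AddCommGroup S] [Module R S],
      IsNthSyzygy R i (M ⧸ (Ideal.ofList x • ⊤ : Submodule R M)) S →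
      ∀ P : ModuleCat.{u} R → Prop, IsResolvingSubcat R P → P (ModuleCat.of R M) →
        P (ModuleCat.of R S) := by
  intro S _ _ hS P hP hM
  obtain ⟨F, hF⟩ := hS
  have hN := hP.iterate_syzygyIn_mono hi _ (hP.quotient_mem hM x hx.toIsWeaklyRegular)
  match i, hF, hN with
  | 0, ⟨e⟩, hN => exact hP.iso_closed _ _ ⟨e.symm⟩ hN
  | 1, ⟨e⟩, hN => exact hP.iso_closed _ _ ⟨e.symm⟩ (hN.2 _ F.aug F.aug_surjective)
  | j + 2, ⟨e⟩, hN => exact hP.iso_closed _ _ ⟨e.symm⟩ (F.ker_d_mem j hN)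
end
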